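/- Fix d ≥ 2. For every V > 0 and every function f : ℕ → ℝ_{>0} with f(k) = o(k^{1/d}) as k → ∞, suppose that for every k the collection {Ω : Ω a bounded convex open subset of ℝ^d with |Ω| ≥ V and |∂Ω| ≤ f(k)} is nonempty. Then limsup_{k→∞} k^{−2/d} · sup{λ_k(Ω) : Ω a bounded convex open subset of ℝ^d with |Ω| ≥ V and |∂Ω| ≤ f(k)} ≤ W_d V^{−2/d}. -/

import Mathlib

/-!
The bound compares a convex domain `Ω` with a packing of small cubes (Dirichlet bracketing from
above). Fix `Λ` above the Weyl level `W_d V^{-2/d}`. The cube of side `M` has about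
`ω_d (M √Λ / (2π))^d` Dirichlet eigenvalues below `Λ`, by counting lattice points in the positive
orthant (`card_posLattice_ge`). Hence for a suitable fixed `M` it has `N` of them with
`N V > M^d` (`exists_radius`). Shrinking by the factor `k^{-1/d}` gives cubes of side
`ℓ = M k^{-1/d}`, each with `N` eigenvalues below `Λ k^{2/d}`. If `Ω` contains at least `k / N`
cubes of the grid of side `ℓ`, then `λ_k(Ω) ≤ Λ k^{2/d}` (`dirichletEig_le_of_cubes`).

The number of grid cubes inside `Ω` is controlled by `exists_cubes`: the part of `Ω` they miss has
volume at most `2 d² ℓ |∂Ω|`. A missed point leaves `Ω` under a translation by `± d ℓ` along some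
axis. By convexity every line parallel to the axis carries at most length `d ℓ` of such points, and
the shadow of `Ω` along the axis is at most `|∂Ω|`. As `|∂Ω| ≤ f k = o(k^{1/d})`, the missed volume
tends to zero uniformly over the admissible `Ω`. Eventually the grid cubes inside `Ω` therefore have
total volume close to `V` or larger, and their number times `N` is at least `k`. The estimate is in
terms of the real number `(μH (frontier Ω)).toReal`, which would be `0` for infinite surface measure; `hausdorff_frontier_lt_top` excludes that case.

The variational formula uses smooth compactly supported functions, whereas the eigenfunctions
`∏ sin (n_i π x_i)` of the cube only vanish on its boundary. They are replaced by
`∏ sin (n_i π ρ(x_i))`, where `ρ` is a smooth reparametrisation of `[0, 1]`, constant near the end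
points and close to the identity. The Gram matrices converge to those of the eigenfunctions, so the
strict inequality `π² |n|² < μ` survives on the span of a finite family (`exists_unit_family`).
-/

open MeasureTheory Filter Asymptotics

/-- The Rayleigh quotient of `u` on `Ω`. -/
noncomputable def rayleighQuot (d : ℕ) (Ω : Set (EuclideanSpace ℝ (Fin d)))
    (u : EuclideanSpace ℝ (Fin d) → ℝ) : ℝ :=
  (∫ x in Ω, ‖fderiv ℝ u x‖ ^ 2) / (∫ x in Ω, (u x) ^ 2)

/-- The `k`-th Dirichlet eigenvalue of `Ω` via the Courant–Fischer variational formula. -/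
noncomputable def dirichletEig (d k : ℕ) (Ω : Set (EuclideanSpace ℝ (Fin d))) : ℝ :=
  ⨅ φ : {φ : Fin k → EuclideanSpace ℝ (Fin d) → ℝ //
      (∀ i, ContDiff ℝ (⊤ : ℕ∞) (φ i) ∧ HasCompactSupport (φ i) ∧ tsupport (φ i) ⊆ Ω) ∧
      LinearIndependent ℝ φ},
    ⨆ c : {c : Fin k → ℝ // c ≠ 0},
      rayleighQuot d Ω (fun x => ∑ i, c.1 i * φ.1 i x)

/-- `ω_d`, the Lebesgue volume of the unit ball in `ℝ^d`. -/
noncomputable def unitBallVol (d : ℕ) : ℝ :=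
  (MeasureTheory.volume (Metric.ball (0 : EuclideanSpace ℝ (Fin d)) 1)).toReal

/-- The Weyl constant `W_d = 4π² ω_d^{-2/d}`. -/
noncomputable def weylConst (d : ℕ) : ℝ :=
  4 * Real.pi ^ 2 * unitBallVol d ^ (-(2 : ℝ) / (d : ℝ))

/-! ### Lattice points in the positive orthant -/

/-- Lattice points with positive coordinates in the closed Euclidean ball of radius `R`. -/
noncomputable def posLattice (d : ℕ) (R : ℝ) : Finset (Fin d → ℕ) :=
  (Fintype.piFinset fun _ => Finset.Icc 1 ⌊R⌋₊).filter fun n => ∑ i, (n i : ℝ) ^ 2 ≤ R ^ 2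

lemma mem_posLattice {d : ℕ} {R : ℝ} (hR : 0 ≤ R) {n : Fin d → ℕ} :
    n ∈ posLattice d R ↔ (∀ i, 1 ≤ n i) ∧ ∑ i, (n i : ℝ) ^ 2 ≤ R ^ 2 := by
  simp only [posLattice, Finset.mem_filter, Fintype.mem_piFinset, Finset.mem_Icc]
  refine ⟨fun h => ⟨fun i => (h.1 i).1, h.2⟩, fun h => ⟨fun i => ⟨h.1 i, ?_⟩, h.2⟩⟩
  apply Nat.le_floor
  have : (n i : ℝ) ^ 2 ≤ R ^ 2 :=
    (Finset.single_le_sum (f := fun i => (n i : ℝ) ^ 2) (fun _ _ => sq_nonneg _)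
      (Finset.mem_univ i)).trans h.2
  exact (abs_le_of_sq_le_sq' this hR).2

lemma unitBallVol_pos (d : ℕ) : 0 < unitBallVol d :=
  ENNReal.toReal_pos (Metric.measure_ball_pos _ _ one_pos).ne' measure_ball_lt_top.ne

/-- Orthant lattice count: reflecting the unit boxes below the points of `posLattice d R` in
all coordinate hyperplanes covers the ball of radius `R - √d`, as `√d` is the diameter of a unit
box. -/
lemma card_posLattice_ge (d : ℕ) (hd : 0 < d) (R : ℝ) (hR : Real.sqrt d ≤ R) :
    unitBallVol d * (R - Real.sqrt d) ^ d ≤ 2 ^ d * (posLattice d R).card := by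
  classical
  have : Nonempty (Fin d) := ⟨⟨0, hd⟩⟩
  have hR0 : 0 ≤ R := (Real.sqrt_nonneg _).trans hR
  let box : (Fin d → Bool) × (Fin d → ℕ) → Set (EuclideanSpace ℝ (Fin d)) := fun p =>
    (MeasurableEquiv.toLp 2 (Fin d → ℝ)).symm ⁻¹' (Set.univ.pi fun i =>
      if p.1 i then Set.Icc ((p.2 i : ℝ) - 1) (p.2 i) else Set.Icc (-(p.2 i : ℝ)) (-(p.2 i : ℝ) + 1))
  have hbox : ∀ p, volume (box p) = 1 := by
    intro p
    rw [(EuclideanSpace.volume_preserving_symm_measurableEquiv_toLp (Fin d)).measure_preimage_equiv,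
      volume_pi_pi]
    refine Finset.prod_eq_one fun i _ => ?_
    split_ifs <;> simp [Real.volume_Icc]
  have hcov : Metric.ball (0 : EuclideanSpace ℝ (Fin d)) (R - Real.sqrt d) ⊆
      ⋃ p ∈ (Finset.univ ×ˢ posLattice d R : Finset ((Fin d → Bool) × (Fin d → ℕ))), box p := by
    intro x hx
    rw [mem_ball_zero_iff] at hx
    let n : Fin d → ℕ := fun i => ⌊|x i|⌋₊ + 1
    have hn1 : ∀ i, (n i : ℝ) ≤ |x i| + 1 := fun i => by
      have := Nat.floor_le (abs_nonneg (x i)); simp only [n]; push_cast; linarith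
    have hn2 : ∀ i, |x i| ≤ n i := fun i => by
      have := (Nat.lt_floor_add_one |x i|).le; simp only [n]; push_cast; linarith
    have hnJ : n ∈ posLattice d R := by
      rw [mem_posLattice hR0]
      refine ⟨fun i => by simp [n], ?_⟩
      let a : EuclideanSpace ℝ (Fin d) := WithLp.toLp 2 fun i => |x i|
      let b : EuclideanSpace ℝ (Fin d) := WithLp.toLp 2 fun i => 1
      have ha : ‖a‖ = ‖x‖ := by simp [EuclideanSpace.norm_eq, a]
      have hb : ‖b‖ = Real.sqrt d := by simp [EuclideanSpace.norm_eq, b]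
      have hab : ‖a + b‖ ≤ R := (norm_add_le a b).trans (by linarith)
      have h2 : ‖a + b‖ ^ 2 ≤ R ^ 2 := by gcongr
      rw [EuclideanSpace.norm_sq_eq] at h2
      refine le_trans (Finset.sum_le_sum fun i _ => ?_) h2
      simp only [a, b, PiLp.add_apply, Real.norm_eq_abs, sq_abs]
      exact pow_le_pow_left₀ (by positivity) (hn1 i) 2
    rw [Set.mem_iUnion₂]
    refine ⟨(fun i => decide (0 ≤ x i), n), by simp [hnJ], ?_⟩
    simp only [box, Set.mem_preimage, Set.mem_univ_pi]
    intro i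
    have h1 := hn1 i
    have h2 := hn2 i
    by_cases hi : 0 ≤ x i
    · rw [abs_of_nonneg hi] at h1 h2
      simp [hi]; constructor <;> linarith
    · rw [abs_of_neg (not_le.1 hi)] at h1 h2
      simp [hi]; constructor <;> linarith
  have hle := (measure_mono hcov).trans (measure_biUnion_finset_le (μ := volume) _ box)
  simp only [hbox, Finset.sum_const, Finset.card_product, Finset.card_univ, Fintype.card_fun,
    Fintype.card_bool, Fintype.card_fin, nsmul_eq_mul, mul_one] at hle
  rw [Measure.addHaar_ball _ _ (by linarith)] at hle
  have h3 := ENNReal.toReal_mono (by finiteness) hle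
  rw [ENNReal.toReal_mul, ENNReal.toReal_ofReal (by have : 0 ≤ R - √d := by linarith
                                                    positivity)] at h3
  simp only [finrank_euclideanSpace, Fintype.card_fin, ENNReal.toReal_natCast] at h3
  push_cast at h3
  rw [mul_comm]
  exact h3

/-! ### Smoothed sines on the interval -/

/-- A smooth cutoff on the line, equal to `1` on `[2δ, 1 - 2δ]` and vanishing off
`(δ, 1 - δ)`, where `δ = 1 / (m + 8)`. -/
noncomputable def cutBump (m : ℕ) : ContDiffBump (1 / 2 : ℝ) where
  rIn := 1 / 2 - 2 / (m + 8)
  rOut := 1 / 2 - 1 / (m + 8)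
  rIn_pos := by
    have : (2 : ℝ) / (m + 8) ≤ 2 / 8 := by gcongr; linarith [(Nat.cast_nonneg m : (0 : ℝ) ≤ m)]
    linarith
  rIn_lt_rOut := by
    have : (1 : ℝ) / (m + 8) < 2 / (m + 8) := by gcongr; norm_num
    linarith

lemma cutBump_nonneg (m : ℕ) (t : ℝ) : 0 ≤ cutBump m t := (cutBump m).nonneg
lemma cutBump_le_one (m : ℕ) (t : ℝ) : cutBump m t ≤ 1 := (cutBump m).le_one
lemma cutBump_continuous (m : ℕ) : Continuous (cutBump m) := (cutBump m).continuous

lemma cutBump_eq_zero (m : ℕ) {t : ℝ} (ht : t ≤ 1 / (m + 8) ∨ 1 - 1 / (m + 8) ≤ t) :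
    cutBump m t = 0 := by
  apply (cutBump m).zero_of_le_dist
  rw [Real.dist_eq]
  simp only [cutBump]
  rcases ht with h | h
  · rw [abs_sub_comm]; refine le_trans ?_ (le_abs_self _); linarith
  · refine le_trans ?_ (le_abs_self _); linarith

lemma tendsto_cutBump {t : ℝ} (ht : t ∈ Set.Ioo (0 : ℝ) 1) :
    Tendsto (fun m => cutBump m t) atTop (nhds 1) := by
  have hlim : Tendsto (fun m : ℕ => (2 : ℝ) / (m + 8)) atTop (nhds 0) :=
    tendsto_const_nhds.div_atTop
      (tendsto_atTop_add_const_right _ _ tendsto_natCast_atTop_atTop)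
  have hpos : 0 < min t (1 - t) := lt_min ht.1 (by linarith [ht.2])
  refine tendsto_const_nhds.congr' ?_
  filter_upwards [hlim.eventually (gt_mem_nhds hpos)] with m hm
  symm
  apply (cutBump m).one_of_mem_closedBall
  rw [Metric.mem_closedBall, Real.dist_eq, abs_le]
  have h1 := hm.trans_le (min_le_left _ _)
  have h2 := hm.trans_le (min_le_right _ _)
  simp only [cutBump]
  constructor <;> linarith

/-- The mass of the cutoff, which tends to `1`; it normalises `reparam`. -/
noncomputable def cutMass (m : ℕ) : ℝ := ∫ t in (0 : ℝ)..1, cutBump m t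

/-- A smooth monotone reparametrisation of `[0, 1]`, constant near both end points and
converging to the identity as `m → ∞`. -/
noncomputable def reparam (m : ℕ) (x : ℝ) : ℝ := (∫ t in (0 : ℝ)..x, cutBump m t) / cutMass m

lemma tendsto_cutInt {x : ℝ} (hx : x ∈ Set.Icc (0 : ℝ) 1) :
    Tendsto (fun m => ∫ t in (0 : ℝ)..x, cutBump m t) atTop (nhds x) := by
  have h : Tendsto (fun m => ∫ t in (0 : ℝ)..x, cutBump m t) atTop (nhds (∫ t in (0 : ℝ)..x, (1 : ℝ))) := by
    refine intervalIntegral.tendsto_integral_filter_of_dominated_convergence (fun _ => 1)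
      (.of_forall fun m => (cutBump_continuous m).aestronglyMeasurable)
      (.of_forall fun m => .of_forall fun t _ => ?_) intervalIntegrable_const ?_
    · rw [Real.norm_of_nonneg (cutBump_nonneg m t)]; exact cutBump_le_one m t
    · filter_upwards [(by simp [ae_iff] : ∀ᵐ t : ℝ, t ≠ 1)] with t ht1 ht
      rw [Set.uIoc_of_le hx.1] at ht
      exact tendsto_cutBump ⟨ht.1, lt_of_le_of_ne (ht.2.trans hx.2) ht1⟩
  simpa using h

lemma tendsto_cutMass : Tendsto cutMass atTop (nhds 1) := tendsto_cutInt ⟨zero_le_one, le_rfl⟩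

lemma tendsto_reparam {x : ℝ} (hx : x ∈ Set.Icc (0 : ℝ) 1) :
    Tendsto (fun m => reparam m x) atTop (nhds x) := by
  have h := (tendsto_cutInt hx).div tendsto_cutMass one_ne_zero
  rw [div_one] at h
  exact h

lemma reparam_hasDerivAt (m : ℕ) (x : ℝ) :
    HasDerivAt (reparam m) (cutBump m x / cutMass m) x :=
  ((cutBump_continuous m).integral_hasStrictDerivAt 0 x).hasDerivAt.div_const _

lemma reparam_contDiff (m : ℕ) : ContDiff ℝ (⊤ : ℕ∞) (reparam m) := by
  rw [contDiff_infty_iff_deriv]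
  refine ⟨fun x => (reparam_hasDerivAt m x).differentiableAt, ?_⟩
  have : deriv (reparam m) = fun x => cutBump m x / cutMass m :=
    funext fun x => (reparam_hasDerivAt m x).deriv
  rw [this]
  exact (cutBump m).contDiff.div_const _

lemma reparam_eq_zero (m : ℕ) {x : ℝ} (hx : x ≤ 1 / (m + 8)) : reparam m x = 0 := by
  rw [reparam, intervalIntegral.integral_congr (g := fun _ => (0 : ℝ)), intervalIntegral.integral_zero,
    zero_div]
  intro t ht
  refine cutBump_eq_zero m (Or.inl ?_)
  exact ht.2.trans (max_le (by positivity) hx)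

lemma reparam_eq_one (m : ℕ) (hm : cutMass m ≠ 0) {x : ℝ} (hx : 1 - 1 / (m + 8) ≤ x) :
    reparam m x = 1 := by
  rw [reparam, ← intervalIntegral.integral_add_adjacent_intervals (b := 1)
    ((cutBump_continuous m).intervalIntegrable _ _) ((cutBump_continuous m).intervalIntegrable _ _),
    intervalIntegral.integral_congr (a := 1) (b := x) (g := fun _ => (0 : ℝ)),
    intervalIntegral.integral_zero, add_zero]
  · exact div_self hm
  intro t ht
  refine cutBump_eq_zero m (Or.inr ?_)
  have h0 : (0 : ℝ) ≤ 1 / (m + 8) := by positivity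
  exact (le_min (by linarith) hx).trans ht.1

/-- Smoothed sine: the `j`-th Dirichlet eigenfunction of `(0, 1)` reparametrised so as to vanish
near the end points. -/
noncomputable def sineFn (m j : ℕ) (x : ℝ) : ℝ := Real.sin (j * Real.pi * reparam m x)

/-- The derivative of `sineFn`. -/
noncomputable def sineFn' (m j : ℕ) (x : ℝ) : ℝ :=
  Real.cos (j * Real.pi * reparam m x) * (j * Real.pi * (cutBump m x / cutMass m))

lemma sineFn_hasDerivAt (m j : ℕ) (x : ℝ) : HasDerivAt (sineFn m j) (sineFn' m j x) x :=
  ((reparam_hasDerivAt m x).const_mul _).sin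

lemma sineFn_contDiff (m j : ℕ) : ContDiff ℝ (⊤ : ℕ∞) (sineFn m j) :=
  Real.contDiff_sin.comp (contDiff_const.mul (reparam_contDiff m))

lemma sineFn_continuous (m j : ℕ) : Continuous (sineFn m j) := (sineFn_contDiff m j).continuous

lemma sineFn'_continuous (m j : ℕ) : Continuous (sineFn' m j) :=
  (Real.continuous_cos.comp (continuous_const.mul (reparam_contDiff m).continuous)).mul
    (continuous_const.mul ((cutBump_continuous m).div_const _))

lemma sineFn_eq_zero (m j : ℕ) (hm : cutMass m ≠ 0) {x : ℝ}
    (hx : x ∉ Set.Ioo (1 / (m + 8) : ℝ) (1 - 1 / (m + 8))) : sineFn m j x = 0 := by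
  rw [sineFn]
  by_cases h : x ≤ 1 / (m + 8)
  · simp [reparam_eq_zero m h]
  · rw [reparam_eq_one m hm (not_lt.1 fun h' => hx ⟨not_le.1 h, h'⟩), mul_one]
    exact Real.sin_nat_mul_pi j

lemma sineFn'_eq_zero (m j : ℕ) {x : ℝ}
    (hx : x ∉ Set.Ioo (1 / (m + 8) : ℝ) (1 - 1 / (m + 8))) : sineFn' m j x = 0 := by
  rw [sineFn', cutBump_eq_zero]
  · simp
  · by_contra! h
    exact hx h

lemma integral_cos_int (k : ℤ) :
    ∫ x in (0 : ℝ)..1, Real.cos (k * Real.pi * x) = if k = 0 then 1 else 0 := by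
  split_ifs with h
  · simp [h]
  · have hk : (k : ℝ) * Real.pi ≠ 0 := mul_ne_zero (by exact_mod_cast h) Real.pi_ne_zero
    rw [intervalIntegral.integral_comp_mul_left (fun x => Real.cos x) hk]
    simp [Real.sin_int_mul_pi]

lemma integral_sin_sin {j l : ℕ} (hj : 1 ≤ j) :
    ∫ x in (0 : ℝ)..1, Real.sin (j * Real.pi * x) * Real.sin (l * Real.pi * x) =
      if j = l then 1 / 2 else 0 := by
  have h : ∀ x : ℝ, Real.sin (j * Real.pi * x) * Real.sin (l * Real.pi * x) =
      (Real.cos (((j - l : ℤ) : ℝ) * Real.pi * x) - Real.cos (((j + l : ℤ) : ℝ) * Real.pi * x)) / 2 := by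
    intro x
    push_cast
    rw [sub_mul, sub_mul, add_mul, add_mul, Real.cos_sub, Real.cos_add]
    ring
  simp_rw [h]
  rw [intervalIntegral.integral_div, intervalIntegral.integral_sub
    (by apply Continuous.intervalIntegrable; fun_prop)
    (by apply Continuous.intervalIntegrable; fun_prop), integral_cos_int, integral_cos_int,
    if_neg (by lia : ¬ ((j : ℤ) + l = 0))]
  by_cases hjl : j = l
  · simp [hjl]
  · rw [if_neg hjl, if_neg (by lia)]; simp

lemma integral_cos_cos {j l : ℕ} (hj : 1 ≤ j) :
    ∫ x in (0 : ℝ)..1, Real.cos (j * Real.pi * x) * Real.cos (l * Real.pi * x) =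
      if j = l then 1 / 2 else 0 := by
  have h : ∀ x : ℝ, Real.cos (j * Real.pi * x) * Real.cos (l * Real.pi * x) =
      (Real.cos (((j - l : ℤ) : ℝ) * Real.pi * x) + Real.cos (((j + l : ℤ) : ℝ) * Real.pi * x)) / 2 := by
    intro x
    push_cast
    rw [sub_mul, sub_mul, add_mul, add_mul, Real.cos_sub, Real.cos_add]
    ring
  simp_rw [h]
  rw [intervalIntegral.integral_div, intervalIntegral.integral_add
    (by apply Continuous.intervalIntegrable; fun_prop)
    (by apply Continuous.intervalIntegrable; fun_prop), integral_cos_int, integral_cos_int,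
    if_neg (by lia : ¬ ((j : ℤ) + l = 0))]
  by_cases hjl : j = l
  · simp [hjl]
  · rw [if_neg hjl, if_neg (by lia)]; simp

/-- A function supported in `(0, 1)` has the same integral over the line and over `[0, 1]`. -/
lemma integral_eq_interval {g : ℝ → ℝ} (hg : ∀ x, x ∉ Set.Ioo (0 : ℝ) 1 → g x = 0) :
    ∫ x, g x = ∫ x in (0 : ℝ)..1, g x := by
  rw [intervalIntegral.integral_of_le zero_le_one, setIntegral_eq_integral_of_forall_compl_eq_zero]
  intro x hx
  exact hg x fun h => hx ⟨h.1, h.2.le⟩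

lemma cut_Ioo_subset (m : ℕ) :
    Set.Ioo (1 / (m + 8) : ℝ) (1 - 1 / (m + 8)) ⊆ Set.Ioo (0 : ℝ) 1 := by
  have h0 : (0 : ℝ) < 1 / (m + 8) := by positivity
  exact fun x hx => ⟨h0.trans hx.1, by linarith [hx.2]⟩

lemma eventually_half_le_cutMass : ∀ᶠ m in atTop, 1 / 2 ≤ cutMass m :=
  tendsto_cutMass.eventually (le_mem_nhds (by norm_num))

/-- The smoothed sines are asymptotically orthogonal, as the sines are. -/
lemma tendsto_sineFn_gram {j l : ℕ} (hj : 1 ≤ j) :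
    Tendsto (fun m => ∫ x, sineFn m j x * sineFn m l x) atTop
      (nhds (if j = l then 1 / 2 else 0)) := by
  rw [← integral_sin_sin hj]
  have hev : ∀ᶠ m in atTop, (∫ x in (0 : ℝ)..1, sineFn m j x * sineFn m l x) =
      ∫ x, sineFn m j x * sineFn m l x := by
    filter_upwards [eventually_half_le_cutMass] with m hm
    rw [integral_eq_interval]
    intro x hx
    rw [sineFn_eq_zero m j (by linarith) fun h => hx (cut_Ioo_subset m h), zero_mul]
  refine Tendsto.congr' hev ?_
  refine intervalIntegral.tendsto_integral_filter_of_dominated_convergence (fun _ => 1)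
    (.of_forall fun m => ((sineFn_continuous m j).mul (sineFn_continuous m l)).aestronglyMeasurable)
    (.of_forall fun m => .of_forall fun t _ => ?_) intervalIntegrable_const
    (.of_forall fun t ht => ?_)
  · rw [norm_mul]
    exact mul_le_one₀ (Real.abs_sin_le_one _) (norm_nonneg _) (Real.abs_sin_le_one _)
  · rw [Set.uIoc_of_le zero_le_one] at ht
    have h := tendsto_reparam (x := t) ⟨ht.1.le, ht.2⟩
    exact ((Real.continuous_sin.tendsto _).comp (h.const_mul _)).mul
      ((Real.continuous_sin.tendsto _).comp (h.const_mul _))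

/-- The derivatives of the smoothed sines are asymptotically orthogonal; the ratio to the `L²` norms
tends to the eigenvalue `π² j²`. -/
lemma tendsto_sineFn'_gram {j l : ℕ} (hj : 1 ≤ j) :
    Tendsto (fun m => ∫ x, sineFn' m j x * sineFn' m l x) atTop
      (nhds (if j = l then Real.pi ^ 2 * j ^ 2 / 2 else 0)) := by
  have hlim : (if j = l then Real.pi ^ 2 * j ^ 2 / 2 else 0) =
      ∫ x in (0 : ℝ)..1, (Real.cos (j * Real.pi * x) * (j * Real.pi * (1 / 1))) *
        (Real.cos (l * Real.pi * x) * (l * Real.pi * (1 / 1))) := by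
    have : ∀ x : ℝ, (Real.cos (j * Real.pi * x) * (j * Real.pi * (1 / 1))) *
        (Real.cos (l * Real.pi * x) * (l * Real.pi * (1 / 1))) =
        (Real.pi ^ 2 * j * l) * (Real.cos (j * Real.pi * x) * Real.cos (l * Real.pi * x)) := by
      intro x; ring
    simp_rw [this]
    rw [intervalIntegral.integral_const_mul, integral_cos_cos hj]
    split_ifs with h
    · rw [h]; ring
    · simp
  rw [hlim]
  have hev : ∀ᶠ m in atTop, (∫ x in (0 : ℝ)..1, sineFn' m j x * sineFn' m l x) =
      ∫ x, sineFn' m j x * sineFn' m l x := by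
    filter_upwards with m
    rw [integral_eq_interval]
    intro x hx
    rw [sineFn'_eq_zero m j fun h => hx (cut_Ioo_subset m h), zero_mul]
  refine Tendsto.congr' hev ?_
  have hbd : ∀ (i m : ℕ) (t : ℝ), 1 / 2 ≤ cutMass m → ‖sineFn' m i t‖ ≤ i * Real.pi * 2 := by
    intro i m t hm
    rw [sineFn', norm_mul, Real.norm_eq_abs, Real.norm_eq_abs,
      abs_of_nonneg (a := i * Real.pi * _)
        (mul_nonneg (by positivity) (div_nonneg (cutBump_nonneg m t) (by linarith)))]
    refine (mul_le_of_le_one_left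
      (mul_nonneg (by positivity) (div_nonneg (cutBump_nonneg m t) (by linarith)))
      (Real.abs_cos_le_one _)).trans ?_
    gcongr
    rw [div_le_iff₀ (by linarith)]
    linarith [cutBump_le_one m t]
  refine intervalIntegral.tendsto_integral_filter_of_dominated_convergence
    (fun _ => (j * Real.pi * 2) * (l * Real.pi * 2))
    (.of_forall fun m => ((sineFn'_continuous m j).mul (sineFn'_continuous m l)).aestronglyMeasurable)
    ?_ intervalIntegrable_const ?_
  · filter_upwards [eventually_half_le_cutMass] with m hm
    refine .of_forall fun t _ => ?_
    rw [norm_mul]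
    exact mul_le_mul (hbd j m t hm) (hbd l m t hm) (norm_nonneg _) (by positivity)
  · filter_upwards [(by simp [ae_iff] : ∀ᵐ t : ℝ, t ≠ 1)] with t ht1 ht
    rw [Set.uIoc_of_le zero_le_one] at ht
    have h := tendsto_reparam (x := t) ⟨ht.1.le, ht.2⟩
    have h2 := (tendsto_cutBump (t := t) ⟨ht.1, lt_of_le_of_ne ht.2 ht1⟩).div tendsto_cutMass one_ne_zero
    exact (((Real.continuous_cos.tendsto _).comp (h.const_mul _)).mul (h2.const_mul _)).mul
      (((Real.continuous_cos.tendsto _).comp (h.const_mul _)).mul (h2.const_mul _))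

/-! ### Test functions on the unit cube -/

lemma integral_prod_euclidean {d : ℕ} (g : Fin d → ℝ → ℝ) :
    ∫ x : EuclideanSpace ℝ (Fin d), ∏ i, g i (x i) = ∏ i, ∫ t, g i t := by
  rw [← integral_fintype_prod_volume_eq_prod]
  exact (PiLp.volume_preserving_ofLp (Fin d)).integral_comp
    (MeasurableEquiv.toLp 2 (Fin d → ℝ)).symm.measurableEmbedding (fun y => ∏ i, g i (y i))

lemma integrable_prod_euclidean {d : ℕ} (g : Fin d → ℝ → ℝ) (hg : ∀ i, Integrable (g i)) :
    Integrable (fun x : EuclideanSpace ℝ (Fin d) => ∏ i, g i (x i)) :=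
  (PiLp.volume_preserving_ofLp (Fin d)).integrable_comp_of_integrable
    (Integrable.fintype_prod (f := g) hg)

lemma norm_sq_dual_eq {d : ℕ} (L : EuclideanSpace ℝ (Fin d) →L[ℝ] ℝ) :
    ‖L‖ ^ 2 = ∑ i, (L (EuclideanSpace.single i 1)) ^ 2 := by
  rw [← LinearIsometryEquiv.norm_map (InnerProductSpace.toDual ℝ _).symm L,
    EuclideanSpace.norm_sq_eq]
  refine Finset.sum_congr rfl fun i _ => ?_
  rw [Real.norm_eq_abs, sq_abs]
  congr 1
  have h : inner ℝ ((InnerProductSpace.toDual ℝ (EuclideanSpace ℝ (Fin d))).symm L)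
      (EuclideanSpace.single i (1 : ℝ)) = L (EuclideanSpace.single i 1) := by simp
  rw [← h, EuclideanSpace.inner_single_right]
  simp

/-- Quadratic forms `G m` converging entrywise to a positive diagonal form are eventually coercive,
with a common constant. -/
lemma exists_coercive {ι : Type*} [Fintype ι] [DecidableEq ι] (G : ℕ → ι → ι → ℝ) (D : ι → ℝ)
    (hD : ∀ a, 0 < D a)
    (hG : ∀ a b, Tendsto (fun m => G m a b) atTop (nhds (if a = b then D a else 0))) :
    ∃ κ > 0, ∀ᶠ m in atTop, ∀ c : ι → ℝ, κ * ∑ a, c a ^ 2 ≤ ∑ a, ∑ b, c a * c b * G m a b := by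
  obtain ⟨κ, hκ, hκD⟩ : ∃ κ > 0, ∀ a, 2 * κ ≤ D a := by
    rcases isEmpty_or_nonempty ι with h | h
    · exact ⟨1, one_pos, fun a => h.elim a⟩
    · obtain ⟨a, ha⟩ := Finite.exists_min D
      exact ⟨D a / 2, half_pos (hD a), fun b => by linarith [ha b]⟩
  refine ⟨κ, hκ, ?_⟩
  -- with entries within `κ / (card ι + 1)` of the limit, the error is at most half of `2 κ ∑ c²`
  have hη : 0 < κ / (Fintype.card ι + 1) := by positivity
  have hev : ∀ᶠ m in atTop, ∀ a b, |G m a b - if a = b then D a else 0| ≤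
      κ / (Fintype.card ι + 1) := by
    refine eventually_all.2 fun a => eventually_all.2 fun b => ?_
    filter_upwards [Metric.tendsto_nhds.1 (hG a b) _ hη] with m hm
    exact hm.le
  filter_upwards [hev] with m hm c
  have h1 : ∀ a b, c a * c b * (if a = b then D a else 0) -
      κ / (Fintype.card ι + 1) * ((c a ^ 2 + c b ^ 2) / 2) ≤ c a * c b * G m a b := by
    intro a b
    obtain ⟨hl, hu⟩ := abs_le.1 (hm a b)
    set g := G m a b - if a = b then D a else 0 with hg
    have : G m a b = g + if a = b then D a else 0 := by rw [hg]; ring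
    rw [this, mul_add]
    have h2 : -(κ / (Fintype.card ι + 1) * ((c a ^ 2 + c b ^ 2) / 2)) ≤ c a * c b * g := by
      nlinarith [mul_nonneg (sq_nonneg (c a + c b)) (by linarith : 0 ≤ κ / (Fintype.card ι + 1) + g),
        mul_nonneg (sq_nonneg (c a - c b)) (by linarith : 0 ≤ κ / (Fintype.card ι + 1) - g)]
    linarith
  refine le_trans ?_ (Finset.sum_le_sum fun a _ => Finset.sum_le_sum fun b _ => h1 a b)
  simp only [Finset.sum_sub_distrib, mul_ite, mul_zero, Finset.sum_ite_eq, Finset.mem_univ, if_true,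
    ← Finset.mul_sum, ← Finset.sum_div, Finset.sum_add_distrib, Finset.sum_const, Finset.card_univ,
    nsmul_eq_mul]
  have h3 : 2 * κ * ∑ a, c a ^ 2 ≤ ∑ a, c a * c a * D a := by
    rw [Finset.mul_sum]
    exact Finset.sum_le_sum fun a _ => by nlinarith [hκD a, mul_self_nonneg (c a)]
  have hS : 0 ≤ ∑ a, c a ^ 2 := Finset.sum_nonneg fun _ _ => sq_nonneg _
  have h4 : κ / (Fintype.card ι + 1) * ((Fintype.card ι * ∑ a, c a ^ 2 +
      Fintype.card ι * ∑ a, c a ^ 2) / 2) ≤ κ * ∑ a, c a ^ 2 := by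
    rw [add_self_div_two, ← mul_assoc]
    refine mul_le_mul_of_nonneg_right ?_ hS
    rw [div_mul_eq_mul_div, div_le_iff₀ (by positivity)]
    nlinarith
  linarith

/-- Products of smoothed sines on the unit cube. -/
noncomputable def cubeFn {d : ℕ} (m : ℕ) (n : Fin d → ℕ) (x : EuclideanSpace ℝ (Fin d)) : ℝ :=
  ∏ i, sineFn m (n i) (x i)

/-- The `i`-th partial derivative of `cubeFn`. -/
noncomputable def cubeFnDeriv {d : ℕ} (m : ℕ) (n : Fin d → ℕ) (i : Fin d)
    (x : EuclideanSpace ℝ (Fin d)) : ℝ :=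
  ∏ j, if j = i then sineFn' m (n j) (x j) else sineFn m (n j) (x j)

/-- The open unit cube. -/
def openUnitCube (d : ℕ) : Set (EuclideanSpace ℝ (Fin d)) := {x | ∀ i, x i ∈ Set.Ioo (0 : ℝ) 1}

lemma cubeFn_contDiff {d : ℕ} (m : ℕ) (n : Fin d → ℕ) :
    ContDiff ℝ (⊤ : ℕ∞) (cubeFn m n) := by
  unfold cubeFn
  refine contDiff_prod fun i _ => ?_
  exact (sineFn_contDiff m (n i)).comp (by fun_prop)

lemma cubeFn_tsupport {d : ℕ} (m : ℕ) (hm : cutMass m ≠ 0) (n : Fin d → ℕ) :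
    tsupport (cubeFn m n) ⊆
      {x | ∀ i, x i ∈ Set.Icc (1 / (m + 8) : ℝ) (1 - 1 / (m + 8))} := by
  refine closure_minimal (fun x hx i => ?_) ?_
  · by_contra h
    refine hx (Finset.prod_eq_zero (Finset.mem_univ i) (sineFn_eq_zero m _ hm fun h' => h ?_))
    exact ⟨h'.1.le, h'.2.le⟩
  · rw [Set.ofPred_forall]
    exact isClosed_iInter fun i => isClosed_Icc.preimage (by fun_prop)

lemma cubeFn_tsupport_subset {d : ℕ} (m : ℕ) (hm : cutMass m ≠ 0) (n : Fin d → ℕ) :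
    tsupport (cubeFn m n) ⊆ openUnitCube d := by
  refine (cubeFn_tsupport m hm n).trans fun x hx i => ?_
  have h0 : (0 : ℝ) < 1 / (m + 8) := by positivity
  exact ⟨h0.trans_le (hx i).1, by linarith [(hx i).2]⟩

lemma openUnitCube_bounded (d : ℕ) : Bornology.IsBounded (openUnitCube d) := by
  refine isBounded_iff_forall_norm_le.2 ⟨Real.sqrt d, fun x hx => ?_⟩
  rw [EuclideanSpace.norm_eq]
  refine Real.sqrt_le_sqrt ?_
  calc ∑ i, ‖x i‖ ^ 2 ≤ ∑ i : Fin d, (1 : ℝ) := Finset.sum_le_sum fun i _ => by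
        rw [Real.norm_of_nonneg (hx i).1.le]
        exact pow_le_one₀ (hx i).1.le (hx i).2.le
    _ = d := by simp

lemma hasCompactSupport_of_tsupport_subset {d : ℕ} {u : EuclideanSpace ℝ (Fin d) → ℝ}
    {s : Set (EuclideanSpace ℝ (Fin d))} (hs : Bornology.IsBounded s) (h : tsupport u ⊆ s) :
    HasCompactSupport u :=
  Metric.isCompact_of_isClosed_isBounded (isClosed_tsupport u) (hs.subset h)

lemma cubeFn_fderiv {d : ℕ} (m : ℕ) (n : Fin d → ℕ) (x : EuclideanSpace ℝ (Fin d)) (i : Fin d) :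
    fderiv ℝ (cubeFn m n) x (EuclideanSpace.single i 1) = cubeFnDeriv m n i x := by
  have h : ∀ j ∈ Finset.univ, HasFDerivAt (fun x : EuclideanSpace ℝ (Fin d) => sineFn m (n j) (x j))
      (sineFn' m (n j) (x j) • (EuclideanSpace.proj j : EuclideanSpace ℝ (Fin d) →L[ℝ] ℝ)) x := by
    intro j _
    have hproj := (EuclideanSpace.proj j : EuclideanSpace ℝ (Fin d) →L[ℝ] ℝ).hasFDerivAt (x := x)
    have hc := (sineFn_hasDerivAt m (n j) (x j)).comp_hasFDerivAt x hproj
    exact hc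
  have h2 := (HasFDerivAt.finsetProd h).fderiv
  have h3 : fderiv ℝ (cubeFn m n) x = _ := h2
  rw [h3]
  simp only [sum_apply, smul_apply, smul_eq_mul]
  rw [Finset.sum_eq_single i]
  · rw [cubeFnDeriv, ← Finset.mul_prod_erase _ _ (Finset.mem_univ i)]
    simp only [if_true]
    rw [mul_comm]
    congr 1
    · simp
    · exact Finset.prod_congr rfl fun j hj => by rw [if_neg (Finset.ne_of_mem_erase hj)]
  · intro j _ hj
    simp [hj]
  · simp

/-- On the unit cube, finitely many Dirichlet eigenvalues below `μ` are witnessed by smooth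
functions supported in the open cube. The gap `κ` makes the form strictly negative on nonzero
coefficient vectors, which also yields linear independence. -/
lemma exists_unit_family {d : ℕ} (J : Finset (Fin d → ℕ)) (hJ : ∀ n ∈ J, ∀ i, 1 ≤ n i) (μ : ℝ)
    (hμ : ∀ n ∈ J, Real.pi ^ 2 * ∑ i, (n i : ℝ) ^ 2 < μ) :
    ∃ κ > 0, ∃ φ : J → EuclideanSpace ℝ (Fin d) → ℝ,
      (∀ n, ContDiff ℝ (⊤ : ℕ∞) (φ n)) ∧ (∀ n, tsupport (φ n) ⊆ openUnitCube d) ∧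
      ∀ c : J → ℝ, (∫ x, ‖fderiv ℝ (fun x => ∑ n, c n * φ n x) x‖ ^ 2) + κ * ∑ n, c n ^ 2 ≤
        μ * ∫ x, (∑ n, c n * φ n x) ^ 2 := by
  classical
  -- Gram matrix of `μ ∫ u² - ∫ ‖∇u‖²`, whose limit is diagonal with entries
  -- `2⁻ᵈ (μ - π² |a|²) > 0`
  let G : ℕ → J → J → ℝ := fun m a b =>
    μ * (∫ x, cubeFn m a.1 x * cubeFn m b.1 x) - ∑ i, ∫ x, cubeFnDeriv m a.1 i x * cubeFnDeriv m b.1 i x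
  have hM : ∀ a b : J, Tendsto (fun m => ∫ x, cubeFn m a.1 x * cubeFn m b.1 x) atTop
      (nhds (if a = b then (1 / 2) ^ d else 0)) := by
    intro a b
    have h1 : ∀ m, ∫ x, cubeFn m a.1 x * cubeFn m b.1 x =
        ∏ i, ∫ t, sineFn m (a.1 i) t * sineFn m (b.1 i) t := by
      intro m
      simp only [cubeFn, ← Finset.prod_mul_distrib]
      exact integral_prod_euclidean fun i t => sineFn m (a.1 i) t * sineFn m (b.1 i) t
    simp_rw [h1]
    convert tendsto_finsetProd Finset.univ fun i _ =>
      tendsto_sineFn_gram (l := b.1 i) (hJ _ a.2 i) using 2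
    split_ifs with hab
    · subst hab; simp
    · obtain ⟨i, hi⟩ : ∃ i, a.1 i ≠ b.1 i := by
        by_contra! h
        exact hab (Subtype.ext (funext h))
      exact (Finset.prod_eq_zero (Finset.mem_univ i) (if_neg hi)).symm
  have hint : ∀ m (n n' : Fin d → ℕ) i, (fun x => cubeFnDeriv m n i x * cubeFnDeriv m n' i x) =
      fun x : EuclideanSpace ℝ (Fin d) => ∏ j, (fun t => if j = i then sineFn' m (n j) t * sineFn' m (n' j) t
        else sineFn m (n j) t * sineFn m (n' j) t) (x j) := by
    intro m n n' i
    funext x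
    rw [cubeFnDeriv, cubeFnDeriv, ← Finset.prod_mul_distrib]
    refine Finset.prod_congr rfl fun j _ => ?_
    split_ifs <;> rfl
  have hK : ∀ (a b : J) (i : Fin d), Tendsto (fun m => ∫ x, cubeFnDeriv m a.1 i x * cubeFnDeriv m b.1 i x)
      atTop (nhds (if a = b then (1 / 2) ^ d * (Real.pi ^ 2 * (a.1 i) ^ 2) else 0)) := by
    intro a b i
    have h1 : ∀ m, ∫ x, cubeFnDeriv m a.1 i x * cubeFnDeriv m b.1 i x =
        ∏ j, if j = i then ∫ t, sineFn' m (a.1 j) t * sineFn' m (b.1 j) t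
          else ∫ t, sineFn m (a.1 j) t * sineFn m (b.1 j) t := by
      intro m
      rw [hint]
      refine (integral_prod_euclidean (fun j t => if j = i then sineFn' m (a.1 j) t * sineFn' m (b.1 j) t
        else sineFn m (a.1 j) t * sineFn m (b.1 j) t)).trans ?_
      refine Finset.prod_congr rfl fun j _ => ?_
      split_ifs <;> rfl
    simp_rw [h1]
    have h2 : ∀ j ∈ Finset.univ, Tendsto (fun m => if j = i then ∫ t, sineFn' m (a.1 j) t * sineFn' m (b.1 j) t
          else ∫ t, sineFn m (a.1 j) t * sineFn m (b.1 j) t) atTop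
          (nhds (if a.1 j = b.1 j then 1 / 2 * (if j = i then Real.pi ^ 2 * (a.1 j) ^ 2 else 1) else 0)) := by
      intro j _
      split_ifs with hji hab hab
      · convert tendsto_sineFn'_gram (l := b.1 j) (hJ _ a.2 j) using 2
        rw [if_pos hab]; ring
      · convert tendsto_sineFn'_gram (l := b.1 j) (hJ _ a.2 j) using 2
        rw [if_neg hab]
      · convert tendsto_sineFn_gram (l := b.1 j) (hJ _ a.2 j) using 2
        rw [if_pos hab]; ring
      · convert tendsto_sineFn_gram (l := b.1 j) (hJ _ a.2 j) using 2
        rw [if_neg hab]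
    convert tendsto_finsetProd Finset.univ h2 using 2
    split_ifs with hab
    · subst hab
      simp only [if_true, Finset.prod_mul_distrib]
      simp
    · obtain ⟨j, hj⟩ : ∃ j, a.1 j ≠ b.1 j := by
        by_contra! h
        exact hab (Subtype.ext (funext h))
      exact (Finset.prod_eq_zero (Finset.mem_univ j) (if_neg hj)).symm
  obtain ⟨κ, hκ, hev⟩ := exists_coercive G
    (fun a => (1 / 2) ^ d * (μ - Real.pi ^ 2 * ∑ i, (a.1 i : ℝ) ^ 2))
    (fun a => mul_pos (by positivity) (sub_pos.2 (hμ _ a.2))) (fun a b => by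
      convert ((hM a b).const_mul μ).sub (tendsto_finsetSum Finset.univ fun i _ => hK a b i) using 2
      split_ifs with hab
      · rw [← Finset.mul_sum, ← Finset.mul_sum]; ring
      · simp)
  obtain ⟨m, hm, hmass⟩ := (hev.and eventually_half_le_cutMass).exists
  have hmass0 : cutMass m ≠ 0 := by linarith
  refine ⟨κ, hκ, fun n => cubeFn m n.1, fun n => cubeFn_contDiff m _,
    fun n => cubeFn_tsupport_subset m hmass0 _, fun c => ?_⟩
  have hsI : ∀ j l : ℕ, Integrable (fun t => sineFn m j t * sineFn m l t) := fun j l => by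
    refine Continuous.integrable_of_hasCompactSupport
      ((sineFn_continuous m j).mul (sineFn_continuous m l))
      (HasCompactSupport.intro (K := Set.Icc 0 1) isCompact_Icc fun x hx => ?_)
    rw [sineFn_eq_zero m j hmass0 fun h => hx (Set.Ioo_subset_Icc_self (cut_Ioo_subset m h)), zero_mul]
  have hsI' : ∀ j l : ℕ, Integrable (fun t => sineFn' m j t * sineFn' m l t) := fun j l => by
    refine Continuous.integrable_of_hasCompactSupport
      ((sineFn'_continuous m j).mul (sineFn'_continuous m l))
      (HasCompactSupport.intro (K := Set.Icc 0 1) isCompact_Icc fun x hx => ?_)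
    rw [sineFn'_eq_zero m j fun h => hx (Set.Ioo_subset_Icc_self (cut_Ioo_subset m h)), zero_mul]
  have hI : ∀ a b : J, Integrable (fun x => cubeFn m a.1 x * cubeFn m b.1 x) := fun a b => by
    simp only [cubeFn, ← Finset.prod_mul_distrib]
    exact integrable_prod_euclidean (fun i t => sineFn m (a.1 i) t * sineFn m (b.1 i) t)
      fun i => hsI _ _
  have hI' : ∀ (a b : J) i, Integrable (fun x => cubeFnDeriv m a.1 i x * cubeFnDeriv m b.1 i x) :=
    fun a b i => by
    rw [hint]
    refine integrable_prod_euclidean (fun j t => if j = i then sineFn' m (a.1 j) t * sineFn' m (b.1 j) t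
        else sineFn m (a.1 j) t * sineFn m (b.1 j) t) fun j => ?_
    by_cases h : j = i
    · simpa [h] using hsI' _ _
    · simpa [h] using hsI _ _
  have hsq : ∀ (g : J → ℝ), (∑ n, c n * g n) ^ 2 = ∑ a, ∑ b, c a * c b * (g a * g b) := by
    intro g
    rw [sq, Finset.sum_mul_sum]
    exact Finset.sum_congr rfl fun a _ => Finset.sum_congr rfl fun b _ => by ring
  have hfd : ∀ x i, fderiv ℝ (fun x => ∑ n : J, c n * cubeFn m n.1 x) x (EuclideanSpace.single i 1) =
      ∑ n : J, c n * cubeFnDeriv m n.1 i x := by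
    intro x i
    have hd : ∀ n : J, DifferentiableAt ℝ (cubeFn m n.1) x := fun n =>
      ((cubeFn_contDiff m n.1).differentiable (by simp)).differentiableAt
    rw [fderiv_fun_sum fun n _ => (hd n).const_mul _, sum_apply]
    refine Finset.sum_congr rfl fun n _ => ?_
    rw [fderiv_const_mul (hd n), smul_apply, cubeFn_fderiv, smul_eq_mul]
  have e1 : ∫ x, (∑ n : J, c n * cubeFn m n.1 x) ^ 2 =
      ∑ a, ∑ b, c a * c b * ∫ x, cubeFn m a.1 x * cubeFn m b.1 x := by
    simp_rw [hsq]
    rw [integral_finsetSum _ fun a _ => integrable_finsetSum _ fun b _ => (hI a b).const_mul _]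
    refine Finset.sum_congr rfl fun a _ => ?_
    rw [integral_finsetSum _ fun b _ => (hI a b).const_mul _]
    exact Finset.sum_congr rfl fun b _ => integral_const_mul _ _
  have e2 : ∫ x, ‖fderiv ℝ (fun x => ∑ n : J, c n * cubeFn m n.1 x) x‖ ^ 2 =
      ∑ a, ∑ b, c a * c b * ∑ i, ∫ x, cubeFnDeriv m a.1 i x * cubeFnDeriv m b.1 i x := by
    simp_rw [norm_sq_dual_eq, hfd, hsq]
    have hIs : ∀ i, Integrable (fun x => ∑ a : J, ∑ b : J, c a * c b *
        (cubeFnDeriv m a.1 i x * cubeFnDeriv m b.1 i x)) := fun i =>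
      integrable_finsetSum _ fun a _ => integrable_finsetSum _ fun b _ => (hI' a b i).const_mul _
    rw [integral_finsetSum _ fun i _ => hIs i]
    simp_rw [Finset.mul_sum]
    rw [Finset.sum_congr rfl fun (a : J) _ => Finset.sum_comm, Finset.sum_comm]
    refine Finset.sum_congr rfl fun i _ => ?_
    rw [integral_finsetSum _ fun a _ => integrable_finsetSum _ fun b _ => (hI' a b i).const_mul _]
    refine Finset.sum_congr rfl fun a _ => ?_
    rw [integral_finsetSum _ fun b _ => (hI' a b i).const_mul _]
    exact Finset.sum_congr rfl fun b _ => integral_const_mul _ _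
  have h := hm c
  have e3 : ∑ a, ∑ b, c a * c b * G m a b =
      μ * (∑ a, ∑ b, c a * c b * ∫ x, cubeFn m a.1 x * cubeFn m b.1 x) -
      ∑ a, ∑ b, c a * c b * ∑ i, ∫ x, cubeFnDeriv m a.1 i x * cubeFnDeriv m b.1 i x := by
    rw [Finset.mul_sum, ← Finset.sum_sub_distrib]
    refine Finset.sum_congr rfl fun a _ => ?_
    rw [Finset.mul_sum, ← Finset.sum_sub_distrib]
    exact Finset.sum_congr rfl fun b _ => by simp only [G]; ring
  rw [e1, e2]
  linarith

/-! ### Disjoint unions of cubes and the variational bound -/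

/-- Pythagoras for summands of which at most one is nonzero. -/
lemma norm_sum_sq_of_disjoint {ι E : Type*} [NormedAddCommGroup E] (s : Finset ι) (L : ι → E)
    (h : ∀ a ∈ s, ∀ b ∈ s, a ≠ b → L a = 0 ∨ L b = 0) :
    ‖∑ a ∈ s, L a‖ ^ 2 = ∑ a ∈ s, ‖L a‖ ^ 2 := by
  by_cases hz : ∃ a ∈ s, L a ≠ 0
  · obtain ⟨a, ha, hLa⟩ := hz
    have h0 : ∀ b ∈ s, b ≠ a → L b = 0 := fun b hb hba => (h b hb a ha hba).resolve_right hLa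
    rw [Finset.sum_eq_single_of_mem a ha h0,
      Finset.sum_eq_single_of_mem a ha fun b hb hba => by simp [h0 b hb hba]]
  · push Not at hz
    rw [Finset.sum_eq_zero hz, Finset.sum_eq_zero fun a ha => by simp [hz a ha]]
    simp

/-- The affine map sending the grid cube of side `ℓ` with index `m` to the unit cube. -/
noncomputable def toUnit {d : ℕ} (ℓ : ℝ) (m : Fin d → ℤ) (x : EuclideanSpace ℝ (Fin d)) :
    EuclideanSpace ℝ (Fin d) := ℓ⁻¹ • x - WithLp.toLp 2 fun i => (m i : ℝ)

lemma toUnit_contDiff {d : ℕ} (ℓ : ℝ) (m : Fin d → ℤ) :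
    ContDiff ℝ (⊤ : ℕ∞) (toUnit (d := d) ℓ m) := by
  unfold toUnit; fun_prop

lemma toUnit_mem {d : ℕ} {ℓ : ℝ} (hℓ : 0 < ℓ) (m : Fin d → ℤ) (x : EuclideanSpace ℝ (Fin d)) :
    toUnit ℓ m x ∈ openUnitCube d ↔ ∀ i, ℓ * m i < x i ∧ x i < ℓ * (m i + 1) := by
  simp only [toUnit, openUnitCube, Set.mem_ofPred_eq]
  refine forall_congr' fun i => ?_
  simp only [PiLp.sub_apply, PiLp.smul_apply, smul_eq_mul, Set.mem_Ioo, sub_pos, sub_lt_iff_lt_add]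
  rw [← div_eq_inv_mul, lt_div_iff₀ hℓ, div_lt_iff₀ hℓ, mul_comm ℓ, mul_comm ℓ, add_comm 1]

lemma toUnit_mem_unique {d : ℕ} {ℓ : ℝ} (hℓ : 0 < ℓ) {m m' : Fin d → ℤ}
    {x : EuclideanSpace ℝ (Fin d)} (h : toUnit ℓ m x ∈ openUnitCube d)
    (h' : toUnit ℓ m' x ∈ openUnitCube d) : m = m' := by
  rw [toUnit_mem hℓ] at h h'
  funext i
  have h1 : (m i : ℝ) < m' i + 1 := lt_of_mul_lt_mul_left ((h i).1.trans (h' i).2) hℓ.le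
  have h2 : (m' i : ℝ) < m i + 1 := lt_of_mul_lt_mul_left ((h' i).1.trans (h i).2) hℓ.le
  have h3 : m i < m' i + 1 := by exact_mod_cast h1
  have h4 : m' i < m i + 1 := by exact_mod_cast h2
  lia

lemma integral_comp_toUnit {d : ℕ} {ℓ : ℝ} (hℓ : 0 < ℓ) (m : Fin d → ℤ)
    (g : EuclideanSpace ℝ (Fin d) → ℝ) : ∫ x, g (toUnit ℓ m x) = ℓ ^ d * ∫ x, g x := by
  unfold toUnit
  rw [Measure.integral_comp_inv_smul volume (fun x => g (x - WithLp.toLp 2 fun i => (m i : ℝ))) ℓ,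
    integral_sub_right_eq_self g]
  simp [abs_of_pos hℓ]

lemma fderiv_comp_toUnit {d : ℕ} {ℓ : ℝ} (m : Fin d → ℤ)
    {g : EuclideanSpace ℝ (Fin d) → ℝ} (hg : Differentiable ℝ g) (x : EuclideanSpace ℝ (Fin d)) :
    fderiv ℝ (fun x => g (toUnit ℓ m x)) x = ℓ⁻¹ • fderiv ℝ g (toUnit ℓ m x) := by
  have h1 : HasFDerivAt (toUnit ℓ m) (ℓ⁻¹ • ContinuousLinearMap.id ℝ (EuclideanSpace ℝ (Fin d))) x :=
    ((hasFDerivAt_id x).const_smul ℓ⁻¹).sub_const _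
  have h2 := ((hg (toUnit ℓ m x)).hasFDerivAt.comp x h1).fderiv
  refine h2.trans ?_
  ext v
  simp

lemma integrable_sq_of_hasCompactSupport {d : ℕ} {v : EuclideanSpace ℝ (Fin d) → ℝ}
    (hv : ContDiff ℝ (⊤ : ℕ∞) v) (hc : HasCompactSupport v) :
    Integrable (fun x => v x ^ 2) ∧ Integrable fun x => ‖fderiv ℝ v x‖ ^ 2 := by
  constructor
  · have hcs : HasCompactSupport fun x => v x ^ 2 := hc.comp_left (g := fun t : ℝ => t ^ 2) (by simp)
    exact (hv.continuous.pow 2).integrable_of_hasCompactSupport hcs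
  · have hcs : HasCompactSupport fun x => ‖fderiv ℝ v x‖ ^ 2 :=
      (hc.fderiv ℝ).comp_left (g := fun L => ‖L‖ ^ 2) (by simp)
    have hct : Continuous fun x => ‖fderiv ℝ v x‖ ^ 2 := (hv.continuous_fderiv (by simp)).norm.pow 2
    exact hct.integrable_of_hasCompactSupport hcs

/-- Placing scaled copies of a family on the unit cube in disjoint grid cubes keeps the
inequality, with `μ` scaled by `ℓ⁻²`. -/
lemma union_family {d : ℕ} {ι : Type*} [Fintype ι] {μ κ ℓ : ℝ} (hℓ : 0 < ℓ)
    {φ : ι → EuclideanSpace ℝ (Fin d) → ℝ} (hφ : ∀ n, ContDiff ℝ (⊤ : ℕ∞) (φ n))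
    (hs : ∀ n, tsupport (φ n) ⊆ openUnitCube d)
    (hE : ∀ c : ι → ℝ, (∫ x, ‖fderiv ℝ (fun x => ∑ n, c n * φ n x) x‖ ^ 2) + κ * ∑ n, c n ^ 2 ≤
        μ * ∫ x, (∑ n, c n * φ n x) ^ 2)
    (C : Finset (Fin d → ℤ)) (c : C × ι → ℝ) :
    (∫ x, ‖fderiv ℝ (fun x => ∑ p : C × ι, c p * φ p.2 (toUnit ℓ p.1.1 x)) x‖ ^ 2) +
      (ℓ⁻¹ ^ 2 * ℓ ^ d * κ) * ∑ p, c p ^ 2 ≤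
        (μ * ℓ⁻¹ ^ 2) * ∫ x, (∑ p : C × ι, c p * φ p.2 (toUnit ℓ p.1.1 x)) ^ 2 := by
  classical
  let w : C → EuclideanSpace ℝ (Fin d) → ℝ := fun m x => ∑ n, c (m, n) * φ n x
  have hw : ∀ m, ContDiff ℝ (⊤ : ℕ∞) (w m) := fun m =>
    ContDiff.sum fun n _ => contDiff_const.mul (hφ n)
  have hwd : ∀ m, Differentiable ℝ (w m) := fun m => (hw m).differentiable (by simp)
  have hwz : ∀ m x, x ∉ openUnitCube d → w m x = 0 := fun m x hx =>
    Finset.sum_eq_zero fun n _ => by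
      rw [image_eq_zero_of_notMem_tsupport fun h => hx (hs n h), mul_zero]
  have hwc : ∀ m, HasCompactSupport (w m) := fun m => by
    refine hasCompactSupport_of_tsupport_subset (openUnitCube_bounded d).closure ?_
    refine closure_mono fun x hx => ?_
    by_contra h
    exact hx (hwz m x h)
  have hwf : ∀ m x, x ∉ openUnitCube d → fderiv ℝ (w m) x = 0 := by
    intro m x hx
    have hd : ∀ n, DifferentiableAt ℝ (φ n) x := fun n =>
      ((hφ n).differentiable (by simp)).differentiableAt
    simp only [w]
    rw [fderiv_fun_sum fun n _ => (hd n).const_mul _]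
    refine Finset.sum_eq_zero fun n _ => ?_
    rw [fderiv_const_mul (hd n)]
    have : fderiv ℝ (φ n) x = 0 := by
      by_contra h
      exact hx (hs n (support_fderiv_subset ℝ h))
    rw [this, smul_zero]
  have hu : (fun x => ∑ p : C × ι, c p * φ p.2 (toUnit ℓ p.1.1 x)) =
      fun x => ∑ m : C, w m (toUnit ℓ m.1 x) := by
    funext x
    rw [Fintype.sum_prod_type]
  have hudisj : ∀ (x : EuclideanSpace ℝ (Fin d)) (a b : C), a ≠ b →
      toUnit ℓ a.1 x ∉ openUnitCube d ∨ toUnit ℓ b.1 x ∉ openUnitCube d := by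
    intro x a b hab
    by_contra! h
    exact hab (Subtype.ext (toUnit_mem_unique hℓ h.1 h.2))
  have hcu : ∀ m : C, Continuous (toUnit ℓ m.1) := fun m => (toUnit_contDiff ℓ m.1).continuous
  have hiso : ∀ (m : C), HasCompactSupport fun x => w m (toUnit ℓ m.1 x) := by
    intro m
    refine (hwc m).comp_isClosedEmbedding (g := toUnit ℓ m.1) ?_
    have := ((Homeomorph.smulOfNeZero ℓ⁻¹ (inv_ne_zero hℓ.ne')).trans
      (Homeomorph.subRight (WithLp.toLp 2 fun i => (m.1 i : ℝ) : EuclideanSpace ℝ (Fin d)))).isClosedEmbedding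
    exact this
  have hsmooth : ∀ m : C, ContDiff ℝ (⊤ : ℕ∞) fun x => w m (toUnit ℓ m.1 x) := fun m =>
    (hw m).comp (toUnit_contDiff ℓ m.1)
  have e1 : ∫ x, (∑ p : C × ι, c p * φ p.2 (toUnit ℓ p.1.1 x)) ^ 2 =
      ∑ m : C, ℓ ^ d * ∫ x, w m x ^ 2 := by
    have hpt : ∀ x, (∑ p : C × ι, c p * φ p.2 (toUnit ℓ p.1.1 x)) ^ 2 =
        ∑ m : C, w m (toUnit ℓ m.1 x) ^ 2 := by
      intro x
      have h := norm_sum_sq_of_disjoint Finset.univ (fun m : C => w m (toUnit ℓ m.1 x))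
        fun a _ b _ hab => (hudisj x a b hab).imp (hwz a _) (hwz b _)
      simp only [Real.norm_eq_abs, sq_abs] at h
      rw [← h, ← congrFun hu x]
    simp_rw [hpt]
    rw [integral_finsetSum]
    · refine Finset.sum_congr rfl fun m _ => ?_
      exact integral_comp_toUnit hℓ m.1 fun x => w m x ^ 2
    · exact fun m _ => (integrable_sq_of_hasCompactSupport (hsmooth m) (hiso m)).1
  have e2 : ∫ x, ‖fderiv ℝ (fun x => ∑ p : C × ι, c p * φ p.2 (toUnit ℓ p.1.1 x)) x‖ ^ 2 =
      ∑ m : C, ℓ⁻¹ ^ 2 * ℓ ^ d * ∫ x, ‖fderiv ℝ (w m) x‖ ^ 2 := by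
    have hpt : ∀ x, ‖fderiv ℝ (fun x => ∑ p : C × ι, c p * φ p.2 (toUnit ℓ p.1.1 x)) x‖ ^ 2 =
        ∑ m : C, ‖fderiv ℝ (fun x => w m (toUnit ℓ m.1 x)) x‖ ^ 2 := by
      intro x
      rw [hu, fderiv_fun_sum fun m _ => ((hsmooth m).differentiable (by simp)).differentiableAt]
      refine norm_sum_sq_of_disjoint _ _ fun a _ b _ hab => ?_
      rw [fderiv_comp_toUnit a.1 (hwd a), fderiv_comp_toUnit b.1 (hwd b)]
      exact (hudisj x a b hab).imp (fun h => by rw [hwf a _ h, smul_zero])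
        (fun h => by rw [hwf b _ h, smul_zero])
    simp_rw [hpt]
    rw [integral_finsetSum]
    · refine Finset.sum_congr rfl fun m _ => ?_
      simp_rw [fderiv_comp_toUnit m.1 (hwd m), norm_smul, mul_pow]
      rw [integral_const_mul, integral_comp_toUnit hℓ m.1 fun x => ‖fderiv ℝ (w m) x‖ ^ 2,
        Real.norm_of_nonneg (inv_nonneg.2 hℓ.le)]
      ring
    · exact fun m _ => (integrable_sq_of_hasCompactSupport (hsmooth m) (hiso m)).2
  rw [e1, e2, Fintype.sum_prod_type, Finset.mul_sum, Finset.mul_sum, ← Finset.sum_add_distrib]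
  refine Finset.sum_le_sum fun m _ => ?_
  have h := mul_le_mul_of_nonneg_left (hE fun n => c (m, n)) (by positivity : 0 ≤ ℓ⁻¹ ^ 2 * ℓ ^ d)
  calc _ = ℓ⁻¹ ^ 2 * ℓ ^ d * ((∫ x, ‖fderiv ℝ (w m) x‖ ^ 2) + κ * ∑ n, c (m, n) ^ 2) := by ring
    _ ≤ _ := h
    _ = _ := by simp only [w]; ring

/-- Upper bound for `dirichletEig` from a family of at least `k` test functions satisfying the
coercive form inequality. -/
lemma dirichletEig_le {d k : ℕ} {ι : Type*} [Fintype ι] {Ω : Set (EuclideanSpace ℝ (Fin d))}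
    {μ κ : ℝ} (hμ : 0 ≤ μ) (hκ : 0 < κ) (hk : k ≤ Fintype.card ι)
    {ψ : ι → EuclideanSpace ℝ (Fin d) → ℝ} (hψ : ∀ n, ContDiff ℝ (⊤ : ℕ∞) (ψ n))
    (hcs : ∀ n, HasCompactSupport (ψ n)) (hs : ∀ n, tsupport (ψ n) ⊆ Ω)
    (hE : ∀ c : ι → ℝ, (∫ x, ‖fderiv ℝ (fun x => ∑ n, c n * ψ n x) x‖ ^ 2) + κ * ∑ n, c n ^ 2 ≤
        μ * ∫ x, (∑ n, c n * ψ n x) ^ 2) :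
    dirichletEig d k Ω ≤ μ := by
  classical
  obtain ⟨e⟩ : Nonempty (Fin k ↪ ι) := Function.Embedding.nonempty_of_card_le (by simpa using hk)
  have hE' : ∀ c : Fin k → ℝ, (∫ x, ‖fderiv ℝ (fun x => ∑ i, c i * ψ (e i) x) x‖ ^ 2) +
      κ * ∑ i, c i ^ 2 ≤ μ * ∫ x, (∑ i, c i * ψ (e i) x) ^ 2 := by
    intro c
    have hext : ∀ (F : ℝ → ι → ℝ), (∀ n, F 0 n = 0) →
        ∑ n, F (Function.extend e c 0 n) n = ∑ i, F (c i) (e i) := by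
      intro F hF
      rw [← Finset.sum_subset (Finset.subset_univ (Finset.univ.map e)), Finset.sum_map]
      · exact Finset.sum_congr rfl fun i _ => by rw [e.injective.extend_apply]
      · intro n _ hn
        rw [Function.extend_apply' _ _ _ fun ⟨i, hi⟩ => hn (by simp [← hi])]
        exact hF n
    have h := hE (Function.extend e c 0)
    have h1 : ∀ x, ∑ n, Function.extend e c 0 n * ψ n x = ∑ i, c i * ψ (e i) x := fun x =>
      hext (fun t n => t * ψ n x) (by simp)
    simp_rw [h1] at h
    rwa [hext (fun t _ => t ^ 2) (by simp)] at h
  have hli : LinearIndependent ℝ fun i => ψ (e i) := by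
    rw [Fintype.linearIndependent_iff]
    intro c hc
    have h0 : ∀ x, ∑ i, c i * ψ (e i) x = 0 := fun x => by
      have := congrFun hc x
      simpa using this
    have h := hE' c
    simp_rw [h0] at h
    simp only [fderiv_fun_const, Pi.zero_apply, norm_zero, ne_eq, OfNat.ofNat_ne_zero,
      not_false_eq_true, zero_pow, integral_zero, zero_add, mul_zero] at h
    have hz : ∑ i, c i ^ 2 ≤ 0 := by
      by_contra! hpos
      exact absurd h (not_le.2 (mul_pos hκ hpos))
    intro i
    have := (Finset.single_le_sum (f := fun i => c i ^ 2) (fun _ _ => sq_nonneg _)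
      (Finset.mem_univ i)).trans hz
    exact pow_eq_zero_iff two_ne_zero |>.1 (le_antisymm this (sq_nonneg _))
  -- the infimum defining `dirichletEig` is over a set bounded below, hence not a junk value
  have hnn : ∀ u, 0 ≤ rayleighQuot d Ω u := fun u =>
    div_nonneg (integral_nonneg fun x => by positivity) (integral_nonneg fun x => sq_nonneg _)
  unfold dirichletEig
  refine (ciInf_le ⟨0, ?_⟩ ⟨fun i => ψ (e i), fun i => ⟨hψ _, hcs _, hs _⟩, hli⟩).trans ?_
  · rintro _ ⟨φ, rfl⟩
    exact Real.iSup_nonneg fun c => hnn _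
  refine Real.iSup_le (fun c => ?_) hμ
  obtain ⟨c, hc⟩ := c
  simp only
  set u : EuclideanSpace ℝ (Fin d) → ℝ := fun x => ∑ i, c i * ψ (e i) x with hu
  -- `u` is supported in `Ω`, so the integrals over `Ω` are integrals over the whole space
  have hz : ∀ x, x ∉ Ω → u x = 0 := fun x hx => Finset.sum_eq_zero fun i _ => by
    rw [image_eq_zero_of_notMem_tsupport fun h => hx (hs _ h), mul_zero]
  have hzf : ∀ x, x ∉ Ω → fderiv ℝ u x = 0 := by
    intro x hx
    have hd : ∀ i, DifferentiableAt ℝ (ψ (e i)) x := fun i =>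
      ((hψ _).differentiable (by simp)).differentiableAt
    simp only [hu]
    rw [fderiv_fun_sum fun i _ => (hd i).const_mul _]
    refine Finset.sum_eq_zero fun i _ => ?_
    rw [fderiv_const_mul (hd i)]
    have : fderiv ℝ (ψ (e i)) x = 0 := by
      by_contra h
      exact hx (hs _ (support_fderiv_subset ℝ h))
    rw [this, smul_zero]
  have h := hE' c
  rw [rayleighQuot, setIntegral_eq_integral_of_forall_compl_eq_zero fun x hx => by simp [hzf x hx],
    setIntegral_eq_integral_of_forall_compl_eq_zero fun x hx => by simp [hz x hx]]
  refine div_le_of_le_mul₀ (integral_nonneg fun x => sq_nonneg _) hμ ?_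
  have : 0 ≤ κ * ∑ i, c i ^ 2 := mul_nonneg hκ.le (Finset.sum_nonneg fun _ _ => sq_nonneg _)
  linarith

/-! ### Exit sets and shadows of convex sets -/

/-- The points of a convex set of the line that leave it under translation by `r` form a set of
diameter at most `|r|`. -/
lemma volume_convex_exit_le (I : Set ℝ) (hI : Convex ℝ I) (r : ℝ) :
    volume {t | t ∈ I ∧ t + r ∉ I} ≤ ENNReal.ofReal |r| := by
  refine (Real.volume_le_diam _).trans (Metric.ediam_le fun x hx y hy => ?_)
  rw [edist_dist]
  refine ENNReal.ofReal_le_ofReal ?_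
  rw [Real.dist_eq]
  have hoc := hI.ordConnected
  by_contra! hcon
  rcases le_total x y with h | h <;> rcases le_total 0 r with h' | h' <;>
    simp only [abs_of_nonneg, abs_of_nonpos, h', sub_nonneg, sub_nonpos, h] at hcon
  · exact hx.2 (hoc.out hx.1 hy.1 ⟨by linarith, by linarith⟩)
  · exact hy.2 (hoc.out hx.1 hy.1 ⟨by linarith, by linarith⟩)
  · exact hy.2 (hoc.out hy.1 hx.1 ⟨by linarith, by linarith⟩)
  · exact hx.2 (hoc.out hy.1 hx.1 ⟨by linarith, by linarith⟩)

/-- The part of a convex set leaving it under translation by `r` along the `i`-th axis has volume at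
most `|r|` times the shadow of the set in that direction: Fubini along lines parallel to the axis. -/
lemma volume_exit_le {n : ℕ} (A : Set (Fin (n + 1) → ℝ)) (hA : IsOpen A) (hc : Convex ℝ A)
    (i : Fin (n + 1)) (r : ℝ) :
    volume {x | x ∈ A ∧ x + Pi.single i r ∉ A} ≤
      ENNReal.ofReal |r| * volume ((fun x : Fin (n + 1) → ℝ => i.removeNth x) '' A) := by
  set S := {x | x ∈ A ∧ x + Pi.single i r ∉ A} with hS
  have hSm : MeasurableSet S := by
    refine hA.measurableSet.inter (MeasurableSet.compl ?_)
    exact (hA.preimage (by fun_prop : Continuous fun x : Fin (n + 1) → ℝ => x + Pi.single i r)).measurableSet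
  have hmp := (volume_preserving_piFinSuccAbove (fun _ : Fin (n + 1) => ℝ) i).symm
  rw [← hmp.measure_preimage hSm.nullMeasurableSet]
  rw [Measure.volume_eq_prod, Measure.prod_apply_symm (hmp.measurable hSm)]
  refine (lintegral_mono (g := ((fun x : Fin (n + 1) → ℝ => i.removeNth x) '' A).indicator
    fun _ => ENNReal.ofReal |r|) fun y => ?_).trans (lintegral_indicator_const_le _ _)
  by_cases hy : y ∈ ((fun x : Fin (n + 1) → ℝ => i.removeNth x) '' A)
  · rw [Set.indicator_of_mem hy]
    let I : Set ℝ := {t | i.insertNth t y ∈ A}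
    have hI : Convex ℝ I := by
      intro s hs t ht a b ha hb hab
      have := hc hs ht ha hb hab
      simp only [I, Set.mem_ofPred_eq]
      convert this using 1
      ext j
      refine Fin.succAboveCases i ?_ (fun j => ?_) j
      · simp
      · simp only [Fin.insertNth_apply_succAbove, Pi.add_apply, Pi.smul_apply, smul_eq_mul]
        rw [← add_mul, hab, one_mul]
    refine le_trans (measure_mono ?_) (volume_convex_exit_le I hI r)
    intro t ht
    simp only [Set.mem_preimage, hS, Set.mem_ofPred_eq, MeasurableEquiv.piFinSuccAbove_symm_apply] at ht
    refine ⟨ht.1, fun h => ht.2 ?_⟩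
    simp only [I, Set.mem_ofPred_eq] at h
    convert h using 1
    ext j
    refine Fin.succAboveCases i ?_ (fun j => ?_) j
    · simp
    · simp
  · rw [Set.indicator_of_notMem hy]
    refine le_of_eq ?_
    convert measure_empty (μ := (volume : Measure ℝ))
    rw [Set.eq_empty_iff_forall_notMem]
    intro t ht
    apply hy
    simp only [Set.mem_preimage, hS, Set.mem_ofPred_eq, MeasurableEquiv.piFinSuccAbove_symm_apply] at ht
    exact ⟨_, ht.1, by simp [Fin.insertNthEquiv]⟩

/-- Every line parallel to an axis that meets a bounded set meets its frontier. -/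
lemma removeNth_image_subset {n : ℕ} (Ω : Set (EuclideanSpace ℝ (Fin (n + 1))))
    (hb : Bornology.IsBounded Ω) (i : Fin (n + 1)) :
    (fun x : EuclideanSpace ℝ (Fin (n + 1)) => i.removeNth x.ofLp) '' Ω ⊆
      (fun x : EuclideanSpace ℝ (Fin (n + 1)) => i.removeNth x.ofLp) '' (frontier Ω) := by
  rintro _ ⟨x, hx, rfl⟩
  let L : ℝ → EuclideanSpace ℝ (Fin (n + 1)) := fun t => x + t • EuclideanSpace.single i 1
  have hL : Continuous L := by fun_prop
  have hpre : IsPreconnected (Set.range L) := isPreconnected_range hL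
  obtain ⟨C, hC0, hC⟩ := hb.exists_pos_norm_le
  have h1 : (Set.range L ∩ Ω).Nonempty := ⟨x, ⟨0, by simp [L]⟩, hx⟩
  have h2 : (Set.range L ∩ Ωᶜ).Nonempty := by
    refine ⟨L (2 * C + 1), ⟨_, rfl⟩, fun h => ?_⟩
    have e1 := hC _ h
    have e2 := hC _ hx
    have e3 : ‖(2 * C + 1) • (EuclideanSpace.single i 1 : EuclideanSpace ℝ (Fin (n + 1)))‖ ≤ C + C := by
      have : (2 * C + 1) • (EuclideanSpace.single i 1 : EuclideanSpace ℝ (Fin (n + 1))) =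
        L (2 * C + 1) - x := by simp [L]
      rw [this]
      exact (norm_sub_le _ _).trans (add_le_add e1 e2)
    rw [norm_smul, PiLp.norm_single, Real.norm_of_nonneg (by linarith)] at e3
    simp at e3
    linarith
  obtain ⟨y, ⟨t, rfl⟩, hy⟩ : (Set.range L ∩ frontier Ω).Nonempty := by
    by_contra hne
    have hdis : ∀ y ∈ Set.range L, y ∉ frontier Ω := fun y hy hy' => hne ⟨y, hy, hy'⟩
    obtain ⟨y, -, hy1, hy2⟩ := hpre (interior Ω) (closure Ω)ᶜ isOpen_interior
      isClosed_closure.isOpen_compl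
      (fun y hy => by
        by_cases h : y ∈ interior Ω
        · exact Or.inl h
        · exact Or.inr fun h' => hdis y hy ⟨h', h⟩)
      (by
        obtain ⟨y, hy, hy'⟩ := h1
        refine ⟨y, hy, ?_⟩
        by_contra h
        exact hdis y hy ⟨subset_closure hy', h⟩)
      (by
        obtain ⟨y, hy, hy'⟩ := h2
        exact ⟨y, hy, fun h => hdis y hy ⟨h, fun h'' => hy' (interior_subset h'')⟩⟩)
    exact hy2 (subset_closure (interior_subset hy1))
  refine ⟨_, hy, ?_⟩
  ext j
  simp [L, Fin.removeNth]

/-- The shadow of a bounded set along an axis is no larger than its frontier, since coordinate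
projections are `1`-Lipschitz. -/
lemma volume_removeNth_image_le {n : ℕ} (Ω : Set (EuclideanSpace ℝ (Fin (n + 1))))
    (hb : Bornology.IsBounded Ω) (i : Fin (n + 1)) :
    volume ((fun x : EuclideanSpace ℝ (Fin (n + 1)) => i.removeNth x.ofLp) '' Ω) ≤
      μH[(n : ℝ)] (frontier Ω) := by
  refine (measure_mono (removeNth_image_subset Ω hb i)).trans ?_
  have hlip : LipschitzWith 1 (fun x : EuclideanSpace ℝ (Fin (n + 1)) => i.removeNth x.ofLp) := by
    refine LipschitzWith.mk_one fun x y => ?_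
    rw [dist_pi_le_iff dist_nonneg]
    intro j
    rw [EuclideanSpace.dist_eq]
    refine Real.le_sqrt_of_sq_le ?_
    exact Finset.single_le_sum (f := fun k => dist (x.ofLp k) (y.ofLp k) ^ 2)
      (fun _ _ => sq_nonneg _) (Finset.mem_univ (i.succAbove j))
  have := hlip.hausdorffMeasure_image_le (d := n) (Nat.cast_nonneg n) (frontier Ω)
  rw [← hausdorffMeasure_pi_real]
  simpa using this

/-! ### Finiteness of the surface measure -/

/-- Nearest point projection onto a closed convex set is nonexpansive: two points satisfying the
variational characterisation. -/
lemma dist_le_of_variational {E : Type*} [NormedAddCommGroup E] [InnerProductSpace ℝ E]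
    {K : Set E} {u v p q : E} (hp : p ∈ K) (hq : q ∈ K)
    (hu : ∀ w ∈ K, inner ℝ (u - p) (w - p) ≤ 0) (hv : ∀ w ∈ K, inner ℝ (v - q) (w - q) ≤ 0) :
    dist p q ≤ dist u v := by
  have h1 := hu q hq
  have h2 := hv p hp
  have h3 : ‖p - q‖ ^ 2 ≤ inner ℝ (u - v) (p - q) := by
    have e : inner ℝ (u - v) (p - q) = ‖p - q‖ ^ 2 - inner ℝ (u - p) (q - p)
        - inner ℝ (v - q) (p - q) := by
      rw [← real_inner_self_eq_norm_sq]
      simp only [inner_sub_left, inner_sub_right]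
      ring
    linarith
  have h4 := real_inner_le_norm (u - v) (p - q)
  rw [dist_eq_norm, dist_eq_norm]
  by_contra! h
  have : 0 < ‖p - q‖ := (norm_nonneg _).trans_lt h
  nlinarith

/-- The boundary of a bounded convex open set has finite surface measure: it lies in the image of
the faces of a large cube under the nearest point projection. -/
lemma hausdorff_frontier_lt_top {n : ℕ} (Ω : Set (EuclideanSpace ℝ (Fin (n + 1))))
    (ho : IsOpen Ω) (hc : Convex ℝ Ω) (hb : Bornology.IsBounded Ω) :
    μH[(n : ℝ)] (frontier Ω) < ⊤ := by
  classical
  rcases Ω.eq_empty_or_nonempty with rfl | hne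
  · simp
  obtain ⟨R, hR0, hR⟩ := hb.closure.exists_pos_norm_le
  let K := closure Ω
  have hKc : Convex ℝ K := hc.closure
  have hproj : ∀ u, ∃ p ∈ K, ∀ w ∈ K, inner ℝ (u - p) (w - p) ≤ 0 := fun u => by
    obtain ⟨p, hp, h⟩ := exists_norm_eq_iInf_of_complete_convex hne.closure
      isClosed_closure.isComplete hKc u
    exact ⟨p, hp, (norm_eq_iInf_iff_real_inner_le_zero hKc hp).1 h⟩
  choose P hPK hP using hproj
  have hPlip : LipschitzWith 1 P :=
    LipschitzWith.mk_one fun u v => dist_le_of_variational (hPK u) (hPK v) (hP u) (hP v)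
  let face : Fin (n + 1) × Bool → (Fin n → ℝ) → EuclideanSpace ℝ (Fin (n + 1)) := fun s y =>
    WithLp.toLp 2 (s.1.insertNth (if s.2 then R else -R) y)
  have hface : ∀ s, ∃ C, LipschitzWith C (face s) := by
    intro s
    have h1 : LipschitzWith 1 (fun y : Fin n → ℝ =>
        (s.1.insertNth (if s.2 then R else -R) y : Fin (n + 1) → ℝ)) := by
      refine LipschitzWith.mk_one fun x y => ?_
      rw [dist_pi_le_iff dist_nonneg]
      intro j
      refine Fin.succAboveCases s.1 ?_ (fun j => ?_) j
      · simp
      · simp [dist_le_pi_dist]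
    exact ⟨_, (PiLp.lipschitzWith_toLp 2 (fun _ : Fin (n + 1) => ℝ)).comp h1⟩
  have hcov : frontier Ω ⊆ ⋃ s, (P ∘ face s) '' (Set.Icc (fun _ => -R) (fun _ => R)) := by
    intro x hx
    have hxK : x ∈ K := hx.1
    have hxΩ : x ∉ Ω := by rw [← ho.interior_eq]; exact hx.2
    obtain ⟨g, hg⟩ := geometric_hahn_banach_open_point hc ho hxΩ
    let v := (InnerProductSpace.toDual ℝ (EuclideanSpace ℝ (Fin (n + 1)))).symm g
    have hv : ∀ w, inner ℝ v w = g w := fun w => by simp [v]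
    have hv0 : v ≠ 0 := by
      intro h
      obtain ⟨a, ha⟩ := hne
      have := hg a ha
      rw [← hv, ← hv, h] at this
      simp at this
    have hgK : ∀ w ∈ K, g w ≤ g x := by
      intro w hw
      exact closure_minimal (fun a ha => (hg a ha).le)
        (isClosed_le g.continuous continuous_const) hw
    -- `v` is an outer normal at `x`, so the whole ray from `x` along `v` projects back to `x`
    have hPx : ∀ t : ℝ, 0 ≤ t → P (x + t • v) = x := by
      intro t ht
      have : dist (P (x + t • v)) x ≤ dist (x + t • v) (x + t • v) := by
        refine dist_le_of_variational (hPK _) hxK (hP _) fun w hw => ?_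
        rw [add_sub_cancel_left, inner_smul_left, hv, map_sub]
        exact mul_nonpos_of_nonneg_of_nonpos (by simpa using ht) (by linarith [hgK w hw])
      rw [dist_self] at this
      exact dist_le_zero.1 this
    -- sup norm along that ray: the ray hits the boundary of the cube `[-R, R]ⁿ⁺¹` where `F = R`
    let F : ℝ → ℝ := fun t => ‖(x + t • v).ofLp‖
    have hF : Continuous F := by fun_prop
    have hcoord : ∀ i, |x i| ≤ R := fun i =>
      (by simpa using PiLp.norm_apply_le x i : |x i| ≤ ‖x‖).trans (hR x hx.1)
    have hF0 : F 0 ≤ R := by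
      simp only [F, zero_smul, add_zero]
      exact (pi_norm_le_iff_of_nonneg hR0.le).2 hcoord
    obtain ⟨i, hi⟩ : ∃ i, v i ≠ 0 := by
      by_contra! h
      exact hv0 (by ext i; simpa using h i)
    have hFT : R ≤ F (2 * R / |v i|) := by
      have h1 : |x i + 2 * R / |v i| * v i| ≤ F (2 * R / |v i|) :=
        norm_le_pi_norm (x + (2 * R / |v i|) • v).ofLp i
      have h2 : |2 * R / |v i| * v i| = 2 * R := by
        rw [abs_mul, abs_div, abs_abs, div_mul_cancel₀ _ (abs_ne_zero.2 hi), abs_of_pos (by linarith)]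
      have h3 := abs_sub_abs_le_abs_sub (2 * R / |v i| * v i) (-(x i))
      rw [sub_neg_eq_add, abs_neg, add_comm _ (x i), h2] at h3
      linarith [hcoord i]
    obtain ⟨t, ht, hFt⟩ := intermediate_value_Icc (by positivity) hF.continuousOn ⟨hF0, hFT⟩
    obtain ⟨j, hj⟩ : ∃ j, |(x + t • v) j| = R := by
      by_contra! h
      have h1 : ∀ j, |(x + t • v) j| ≤ R := fun j =>
        (norm_le_pi_norm (x + t • v).ofLp j).trans hFt.le
      have := (pi_norm_lt_iff (x := (x + t • v).ofLp) hR0).2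
        fun j => lt_of_le_of_ne (h1 j) (h j)
      exact this.ne hFt
    rw [Set.mem_iUnion]
    have hbd : j.removeNth (x + t • v).ofLp ∈ Set.Icc (fun _ : Fin n => -R) (fun _ => R) := by
      rw [← Set.pi_univ_Icc]
      intro k _
      exact abs_le.1 ((norm_le_pi_norm (x + t • v).ofLp (j.succAbove k)).trans hFt.le)
    have hglue : WithLp.toLp 2 (j.insertNth ((x + t • v).ofLp j)
        (j.removeNth (x + t • v).ofLp) : Fin (n + 1) → ℝ) = x + t • v := by
      rw [Fin.insertNth_self_removeNth]
    rcases abs_eq hR0.le |>.1 hj with h | h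
    · refine ⟨(j, true), _, hbd, ?_⟩
      rw [h] at hglue
      simp only [Function.comp_apply, face, if_true, hglue, hPx t ht.1]
    · refine ⟨(j, false), _, hbd, ?_⟩
      rw [h] at hglue
      simp only [Function.comp_apply, face, Bool.false_eq_true, if_false, hglue, hPx t ht.1]
  refine (measure_mono hcov).trans_lt ((measure_iUnion_le _).trans_lt ?_)
  rw [tsum_fintype]
  refine ENNReal.sum_lt_top.2 fun s _ => ?_
  obtain ⟨C, hC⟩ := hface s
  refine ((hPlip.comp hC).hausdorffMeasure_image_le (Nat.cast_nonneg n) _).trans_lt ?_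
  refine ENNReal.mul_lt_top (by finiteness) ?_
  have := hausdorffMeasure_pi_real (ι := Fin n)
  rw [Fintype.card_fin] at this
  rw [this, ← Set.pi_univ_Icc, volume_pi_pi]
  exact ENNReal.prod_lt_top fun _ _ => by simp

/-! ### Grid cubes inside a convex set -/

/-- If the translates of `x` by `± d ℓ` along every axis lie in a convex set, so does the sup-norm
ball of radius `ℓ` around `x`, because that ball lies in the cross-polytope they span. -/
lemma mem_of_cross {d : ℕ} (hd : 0 < d) {A : Set (Fin d → ℝ)} (hc : Convex ℝ A) {ℓ : ℝ}
    (hℓ : 0 < ℓ) {x y : Fin d → ℝ} (h1 : ∀ i, x + Pi.single i (d * ℓ) ∈ A)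
    (h2 : ∀ i, x + Pi.single i (-(d * ℓ)) ∈ A) (hy : ∀ i, |y i - x i| ≤ ℓ) : y ∈ A := by
  have hd' : (0 : ℝ) < d := by exact_mod_cast hd
  have hseg : ∀ i, x + Pi.single i (d * (y i - x i)) ∈ A := by
    intro i
    obtain ⟨hl, hu⟩ := abs_le.1 (hy i)
    have hmem := hc (h1 i) (h2 i) (a := (1 + (y i - x i) / ℓ) / 2) (b := (1 - (y i - x i) / ℓ) / 2)
      (by
        have : -1 ≤ (y i - x i) / ℓ := by rw [le_div_iff₀ hℓ]; linarith
        linarith)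
      (by
        have : (y i - x i) / ℓ ≤ 1 := by rw [div_le_iff₀ hℓ]; linarith
        linarith)
      (by ring)
    convert hmem using 1
    ext j
    by_cases hj : j = i
    · subst hj
      simp only [Pi.add_apply, Pi.single_eq_same, Pi.smul_apply, smul_eq_mul]
      field_simp
      ring
    · simp only [Pi.add_apply, Pi.single_eq_of_ne hj, Pi.smul_apply, smul_eq_mul]
      ring
  have hsum := hc.sum_mem (t := Finset.univ) (w := fun _ : Fin d => 1 / (d : ℝ))
    (fun _ _ => by positivity) (by simp [hd'.ne']) (fun i _ => hseg i)
  convert hsum using 1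
  ext j
  simp only [Finset.sum_apply, Pi.smul_apply, Pi.add_apply, smul_eq_mul, mul_add,
    Finset.sum_add_distrib, Finset.sum_const, Finset.card_univ, Fintype.card_fin, nsmul_eq_mul]
  rw [← Finset.mul_sum, Finset.sum_pi_single]
  simp only [Finset.mem_univ, if_true]
  field_simp
  ring

/-- The closed cube of side `ℓ` with lower corner `ℓ m`. -/
def gridCube {d : ℕ} (ℓ : ℝ) (m : Fin d → ℤ) : Set (EuclideanSpace ℝ (Fin d)) :=
  {x | ∀ i, x i ∈ Set.Icc (ℓ * m i) (ℓ * (m i + 1))}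

lemma volume_gridCube {d : ℕ} {ℓ : ℝ} (m : Fin d → ℤ) :
    volume (gridCube ℓ m) = ENNReal.ofReal ℓ ^ d := by
  have : gridCube ℓ m = (MeasurableEquiv.toLp 2 (Fin d → ℝ)).symm ⁻¹'
      (Set.univ.pi fun i => Set.Icc (ℓ * m i) (ℓ * (m i + 1))) := by
    ext x
    simp [gridCube, -Set.pi_univ_Icc]
  rw [this, (EuclideanSpace.volume_preserving_symm_measurableEquiv_toLp (Fin d)).measure_preimage_equiv,
    volume_pi_pi]
  simp [Real.volume_Icc, mul_add]

/-- The part of `Ω` not covered by the grid cubes contained in `Ω` has volume at most a constant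
times the side length times the surface area. -/
lemma exists_cubes {n : ℕ} (Ω : Set (EuclideanSpace ℝ (Fin (n + 1))))
    (ho : IsOpen Ω) (hc : Convex ℝ Ω) (hb : Bornology.IsBounded Ω) {ℓ : ℝ} (hℓ : 0 < ℓ) :
    ∃ C : Finset (Fin (n + 1) → ℤ), (∀ m ∈ C, gridCube ℓ m ⊆ Ω) ∧
      (volume Ω).toReal ≤ ℓ ^ (n + 1) * C.card +
        2 * (n + 1) ^ 2 * ℓ * (μH[(n : ℝ)] (frontier Ω)).toReal := by
  classical
  have hfin : {m : Fin (n + 1) → ℤ | gridCube ℓ m ⊆ Ω}.Finite := by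
    obtain ⟨R, hR0, hR⟩ := hb.exists_pos_norm_le
    refine (Set.finite_Icc (fun _ : Fin (n + 1) => -⌈R / ℓ⌉) (fun _ => ⌈R / ℓ⌉)).subset ?_
    intro m hm
    have hmem : (WithLp.toLp 2 fun i => ℓ * (m i : ℝ) : EuclideanSpace ℝ (Fin (n + 1))) ∈ Ω :=
      hm fun i => ⟨le_rfl, by simp only; nlinarith⟩
    have hbd : ∀ i, |(m i : ℝ)| ≤ ⌈R / ℓ⌉ := by
      intro i
      have h1 := (PiLp.norm_apply_le _ i).trans (hR _ hmem)
      simp only [Real.norm_eq_abs, abs_mul, abs_of_pos hℓ] at h1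
      exact ((le_div_iff₀ hℓ).2 (by linarith)).trans (Int.le_ceil _)
    rw [← Set.pi_univ_Icc]
    intro i _
    have := abs_le.1 (hbd i)
    exact ⟨by exact_mod_cast this.1, by exact_mod_cast this.2⟩
  refine ⟨hfin.toFinset, fun m hm => by simpa using hm, ?_⟩
  set C := hfin.toFinset
  let A : Set (Fin (n + 1) → ℝ) := WithLp.toLp 2 ⁻¹' Ω
  have hAo : IsOpen A := ho.preimage (PiLp.continuous_toLp 2 _)
  have hAc : Convex ℝ A := by
    intro x hx y hy a b ha hb' hab
    exact hc hx hy ha hb' hab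
  let r : Bool → ℝ := fun s => if s then (n + 1 : ℕ) * ℓ else -((n + 1 : ℕ) * ℓ)
  have hr : ∀ s, |r s| = (n + 1 : ℕ) * ℓ := by
    intro s
    cases s <;> simp only [r, Bool.false_eq_true, if_false, if_true, abs_neg] <;>
      exact abs_of_pos (by positivity)
  let S : Fin (n + 1) × Bool → Set (EuclideanSpace ℝ (Fin (n + 1))) := fun p =>
    (MeasurableEquiv.toLp 2 (Fin (n + 1) → ℝ)).symm ⁻¹' {x | x ∈ A ∧ x + Pi.single p.1 (r p.2) ∉ A}
  have hS : ∀ p, volume (S p) ≤ ENNReal.ofReal ((n + 1 : ℕ) * ℓ) * μH[(n : ℝ)] (frontier Ω) := by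
    intro p
    rw [(EuclideanSpace.volume_preserving_symm_measurableEquiv_toLp _).measure_preimage_equiv]
    refine (volume_exit_le A hAo hAc p.1 (r p.2)).trans ?_
    rw [hr]
    gcongr
    refine le_trans (measure_mono ?_) (volume_removeNth_image_le Ω hb p.1)
    rintro _ ⟨x, hx, rfl⟩
    exact ⟨WithLp.toLp 2 x, hx, rfl⟩
  -- a point of `Ω` outside all the exit sets `S p` lies in a grid cube contained in `Ω`
  have hcov : Ω ⊆ (⋃ m ∈ C, gridCube ℓ m) ∪ ⋃ p, S p := by
    intro x hx
    by_cases hxS : ∃ p, x ∈ S p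
    · exact Or.inr (Set.mem_iUnion.2 hxS)
    · left
      have hstay : ∀ i s, x.ofLp + Pi.single i (r s) ∈ A := by
        intro i s
        by_contra h
        exact hxS ⟨(i, s), ⟨hx, h⟩⟩
      let m : Fin (n + 1) → ℤ := fun i => ⌊x i / ℓ⌋
      have hxm : ∀ i, x i ∈ Set.Icc (ℓ * m i) (ℓ * (m i + 1)) := by
        intro i
        have h1 := Int.floor_le (x i / ℓ)
        have h2 := (Int.lt_floor_add_one (x i / ℓ)).le
        rw [le_div_iff₀ hℓ] at h1
        rw [div_le_iff₀ hℓ] at h2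
        exact ⟨by simp only [m]; linarith, by simp only [m]; linarith⟩
      refine Set.mem_iUnion₂.2 ⟨m, ?_, hxm⟩
      simp only [C, Set.Finite.mem_toFinset, Set.mem_ofPred_eq]
      intro y hy
      have : y.ofLp ∈ A := by
        refine mem_of_cross (Nat.succ_pos n) hAc hℓ (x := x.ofLp) (fun i => by simpa [r] using hstay i true)
          (fun i => by simpa [r] using hstay i false) fun i => ?_
        have h1 := hxm i
        have h2 := hy i
        rw [Set.mem_Icc] at h1 h2
        rw [abs_le]
        constructor <;> linarith
      exact this
  have hμ := hausdorff_frontier_lt_top Ω ho hc hb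
  have hle : volume Ω ≤ C.card * ENNReal.ofReal ℓ ^ (n + 1) +
      (2 * (n + 1) : ℕ) * (ENNReal.ofReal ((n + 1 : ℕ) * ℓ) * μH[(n : ℝ)] (frontier Ω)) := by
    refine (measure_mono hcov).trans ((measure_union_le _ _).trans (add_le_add ?_ ?_))
    · refine (measure_biUnion_finset_le _ _).trans (le_of_eq ?_)
      simp [volume_gridCube]
    · refine (measure_iUnion_le _).trans ?_
      rw [tsum_fintype]
      refine (Finset.sum_le_sum fun p _ => hS p).trans (le_of_eq ?_)
      simp [mul_comm]
  have h3 := ENNReal.toReal_mono (by finiteness) hle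
  rw [ENNReal.toReal_add (by finiteness) (by finiteness)] at h3
  simp only [ENNReal.toReal_mul, ENNReal.toReal_natCast, ENNReal.toReal_pow,
    ENNReal.toReal_ofReal hℓ.le] at h3
  rw [ENNReal.toReal_ofReal (by positivity)] at h3
  push_cast at h3
  refine h3.trans (le_of_eq ?_)
  ring

/-! ### Asymptotics -/

/-- For `Λ` above the Weyl level there is a radius at which the lattice count of the cube of side
`M = π (R + 1) / √Λ`, taken per unit volume, exceeds `1 / V`. -/
lemma exists_radius {d : ℕ} (hd : 0 < d) {V Λ : ℝ} (hV : 0 < V)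
    (hΛ : weylConst d * V ^ (-(2 : ℝ) / (d : ℝ)) < Λ) :
    ∃ R : ℝ, 0 ≤ R ∧ (Real.pi * (R + 1) / Real.sqrt Λ) ^ d < (posLattice d R).card * V := by
  have hω := unitBallVol_pos d
  have hd' : (d : ℝ) ≠ 0 := by exact_mod_cast hd.ne'
  set ω := unitBallVol d with hωd
  have hVω : 0 < V * ω := mul_pos hV hω
  set b : ℝ := (V * ω) ^ ((1 : ℝ) / d) with hb
  have hbpos : 0 < b := Real.rpow_pos_of_pos hVω _
  have hbd : b ^ d = V * ω := by
    rw [hb, ← Real.rpow_natCast, ← Real.rpow_mul hVω.le, one_div_mul_cancel hd', Real.rpow_one]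
  have hb2 : weylConst d * V ^ (-(2 : ℝ) / (d : ℝ)) = (2 * Real.pi / b) ^ 2 := by
    have h1 : ω ^ (-(2 : ℝ) / (d : ℝ)) * V ^ (-(2 : ℝ) / (d : ℝ)) = (b ^ 2)⁻¹ := by
      rw [← Real.mul_rpow hω.le hV.le, mul_comm ω, hb, ← Real.rpow_natCast, ← Real.rpow_mul hVω.le,
        ← Real.rpow_neg hVω.le]
      congr 1
      push_cast
      ring
    rw [weylConst, ← hωd, mul_assoc, h1, div_pow]
    ring
  have hπ := Real.pi_pos
  have hs : 2 * Real.pi / b < Real.sqrt Λ := by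
    rw [hb2] at hΛ
    exact Real.lt_sqrt_of_sq_lt hΛ
  have hsΛ : 0 < Real.sqrt Λ := lt_trans (by positivity) hs
  have ha : (2 * Real.pi / Real.sqrt Λ) ^ d < V * ω := by
    rw [← hbd]
    refine pow_lt_pow_left₀ ?_ (by positivity) hd.ne'
    rw [div_lt_iff₀ hbpos] at hs
    rw [div_lt_iff₀ hsΛ]
    linarith
  have ht : Tendsto (fun R : ℝ => (2 * Real.pi / Real.sqrt Λ * ((R + 1) / (R - Real.sqrt d))) ^ d)
      atTop (nhds ((2 * Real.pi / Real.sqrt Λ) ^ d)) := by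
    have h1 : Tendsto (fun R : ℝ => (R + 1) / (R - Real.sqrt d)) atTop (nhds 1) := by
      have h2 : Tendsto (fun R : ℝ => 1 + (1 + Real.sqrt d) / (R - Real.sqrt d)) atTop
          (nhds (1 + 0)) :=
        tendsto_const_nhds.add
          ((tendsto_atTop_add_const_right _ (-Real.sqrt d) tendsto_id).const_div_atTop _)
      rw [add_zero] at h2
      refine h2.congr' ?_
      filter_upwards [eventually_gt_atTop (Real.sqrt d)] with R hR
      have : R - Real.sqrt d ≠ 0 := (sub_pos.2 hR).ne'
      field_simp
      ring
    simpa using (h1.const_mul (2 * Real.pi / Real.sqrt Λ)).pow d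
  obtain ⟨R, hR1, hR2⟩ := ((ht.eventually_lt_const ha).and
    (eventually_gt_atTop (Real.sqrt d))).exists
  have hR0 : 0 ≤ R := (Real.sqrt_nonneg _).trans hR2.le
  refine ⟨R, hR0, ?_⟩
  have hsub : 0 < R - Real.sqrt d := sub_pos.2 hR2
  have hcard := card_posLattice_ge d hd R hR2.le
  rw [← hωd] at hcard
  have hp : 0 < (R - Real.sqrt d) ^ d := pow_pos hsub d
  have key : (Real.pi * (R + 1) / Real.sqrt Λ) ^ d * 2 ^ d < V * ω * (R - Real.sqrt d) ^ d := by
    have h3 := mul_lt_mul_of_pos_right hR1 hp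
    have h4 : Real.pi * (R + 1) / Real.sqrt Λ * 2 = 2 * Real.pi / Real.sqrt Λ *
        ((R + 1) / (R - Real.sqrt d)) * (R - Real.sqrt d) := by
      rw [mul_assoc _ ((R + 1) / _), div_mul_cancel₀ _ hsub.ne']
      ring
    rwa [← mul_pow, h4, mul_pow]
  have h2 : (0 : ℝ) < 2 ^ d := by positivity
  have h4 : V * ω * (R - Real.sqrt d) ^ d ≤ V * (2 ^ d * (posLattice d R).card) := by
    rw [mul_assoc]
    exact mul_le_mul_of_nonneg_left hcard hV.le
  refine lt_of_mul_lt_mul_right (key.trans_le (h4.trans_eq ?_)) h2.le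
  ring

/-- An open set containing the grid cubes of side `ℓ` indexed by `C` inherits from the unit cube
an upper bound on its eigenvalues up to order `#C * #J`. -/
lemma dirichletEig_le_of_cubes {d k : ℕ} {Ω : Set (EuclideanSpace ℝ (Fin d))}
    (hb : Bornology.IsBounded Ω) {R ℓ μ : ℝ} (hR : 0 ≤ R) (hℓ : 0 < ℓ)
    (hμ : (Real.pi * R) ^ 2 < μ) (C : Finset (Fin d → ℤ)) (hC : ∀ m ∈ C, gridCube ℓ m ⊆ Ω)
    (hk : k ≤ C.card * (posLattice d R).card) :
    dirichletEig d k Ω ≤ μ * ℓ⁻¹ ^ 2 := by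
  have hμ0 : 0 ≤ μ := (sq_nonneg _).trans hμ.le
  obtain ⟨κ, hκ, φ, hφ, hs, hE⟩ := exists_unit_family (posLattice d R)
    (fun n hn => ((mem_posLattice hR).1 hn).1) μ fun n hn => by
      refine lt_of_le_of_lt ?_ hμ
      rw [mul_pow]
      exact mul_le_mul_of_nonneg_left ((mem_posLattice hR).1 hn).2 (sq_nonneg _)
  have hsub : ∀ p : C × posLattice d R,
      tsupport (fun x => φ p.2 (toUnit ℓ p.1.1 x)) ⊆ gridCube ℓ p.1.1 := by
    intro p
    have hcl : IsClosed (gridCube ℓ p.1.1) := by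
      have : gridCube ℓ p.1.1 = ⋂ i, (fun x : EuclideanSpace ℝ (Fin d) => x i) ⁻¹'
          Set.Icc (ℓ * p.1.1 i) (ℓ * (p.1.1 i + 1)) := by
        ext x
        simp [gridCube]
      rw [this]
      exact isClosed_iInter fun i => isClosed_Icc.preimage (by fun_prop)
    refine closure_minimal (fun x hx => ?_) hcl
    have hx' : toUnit ℓ p.1.1 x ∈ openUnitCube d := hs p.2 (subset_tsupport _ hx)
    exact fun i => ⟨((toUnit_mem hℓ _ x).1 hx' i).1.le, ((toUnit_mem hℓ _ x).1 hx' i).2.le⟩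
  refine dirichletEig_le (ι := C × posLattice d R)
    (ψ := fun p x => φ p.2 (toUnit ℓ p.1.1 x)) (κ := ℓ⁻¹ ^ 2 * ℓ ^ d * κ) (by positivity)
    (by positivity) (by simpa using hk) (fun p => (hφ p.2).comp (toUnit_contDiff ℓ p.1.1))
    (fun p => hasCompactSupport_of_tsupport_subset (hb.subset (hC _ p.1.2)) (hsub p))
    (fun p => (hsub p).trans (hC _ p.1.2)) (union_family hℓ hφ hs hE C)

lemma dirichletEig_nonneg (d k : ℕ) (Ω : Set (EuclideanSpace ℝ (Fin d))) :
    0 ≤ dirichletEig d k Ω :=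
  Real.iInf_nonneg fun _ => Real.iSup_nonneg fun _ =>
    div_nonneg (integral_nonneg fun _ => by positivity) (integral_nonneg fun _ => sq_nonneg _)

/-- Uniformly over the admissible domains, the `k`-th eigenvalue is eventually below `Λ k^{2/d}`
whenever `Λ` exceeds the Weyl level of volume `V`. -/
lemma eventually_dirichletEig_le {n : ℕ} {V Λ : ℝ} (hV : 0 < V)
    (hΛ : weylConst (n + 1) * V ^ (-(2 : ℝ) / ((n + 1 : ℕ) : ℝ)) < Λ) (f : ℕ → ℝ)
    (hf : f =o[atTop] fun k : ℕ => (k : ℝ) ^ ((1 : ℝ) / ((n + 1 : ℕ) : ℝ))) :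
    ∀ᶠ k : ℕ in atTop, 0 < k ∧ ∀ Ω : Set (EuclideanSpace ℝ (Fin (n + 1))),
      IsOpen Ω → Convex ℝ Ω → Bornology.IsBounded Ω → V ≤ (volume Ω).toReal →
      (μH[(n : ℝ)] (frontier Ω)).toReal ≤ f k →
      dirichletEig (n + 1) k Ω ≤ Λ * ((k : ℝ) ^ ((1 : ℝ) / ((n + 1 : ℕ) : ℝ))) ^ 2 := by
  have hΛ0 : 0 < Λ := by
    refine lt_of_le_of_lt ?_ hΛ
    have := unitBallVol_pos (n + 1)
    unfold weylConst
    positivity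
  have hsΛ : 0 < Real.sqrt Λ := Real.sqrt_pos.2 hΛ0
  obtain ⟨R, hR, hN⟩ := exists_radius (Nat.succ_pos n) hV hΛ
  set N := (posLattice (n + 1) R).card with hNdef
  set M : ℝ := Real.pi * (R + 1) / Real.sqrt Λ with hM
  have hM0 : 0 < M := by positivity
  have hlim : Tendsto (fun k : ℕ => (N : ℝ) * (V - 2 * ((n : ℝ) + 1) ^ 2 * M *
      (f k / (k : ℝ) ^ ((1 : ℝ) / ((n + 1 : ℕ) : ℝ))))) atTop
      (nhds (N * (V - 2 * ((n : ℝ) + 1) ^ 2 * M * 0))) :=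
    ((hf.tendsto_div_nhds_zero.const_mul _).const_sub V).const_mul _
  rw [mul_zero, sub_zero] at hlim
  filter_upwards [hlim.eventually_const_lt hN, eventually_gt_atTop 0] with k hk hk0
  refine ⟨hk0, fun Ω ho hc hb hvol hfr => ?_⟩
  have hk0' : (0 : ℝ) < k := by exact_mod_cast hk0
  set q : ℝ := (k : ℝ) ^ ((1 : ℝ) / ((n + 1 : ℕ) : ℝ)) with hq
  have hq0 : 0 < q := Real.rpow_pos_of_pos hk0' _
  have hqd : q ^ (n + 1) = k := by
    rw [hq, ← Real.rpow_natCast, ← Real.rpow_mul hk0'.le, one_div_mul_cancel (by positivity),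
      Real.rpow_one]
  -- cubes of side `M k^{-1/d}` carry `N` functions each, at spectral level `Λ k^{2/d}`
  have hℓ : 0 < M / q := div_pos hM0 hq0
  obtain ⟨C, hC, hCvol⟩ := exists_cubes Ω ho hc hb hℓ
  have hΛM : Λ * M ^ 2 = (Real.pi * (R + 1)) ^ 2 := by
    rw [hM, div_pow, Real.sq_sqrt hΛ0.le]
    field_simp
  have hμ : (Real.pi * R) ^ 2 < Λ * M ^ 2 := by
    rw [hΛM]
    have := Real.pi_pos
    exact pow_lt_pow_left₀ (by nlinarith) (by positivity) two_ne_zero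
  have hcount : k ≤ C.card * N := by
    have h1 : V - 2 * ((n : ℝ) + 1) ^ 2 * M * (f k / q) ≤ M ^ (n + 1) / k * C.card := by
      have h2 : 2 * ((n : ℝ) + 1) ^ 2 * (M / q) * (μH[(n : ℝ)] (frontier Ω)).toReal ≤
          2 * ((n : ℝ) + 1) ^ 2 * (M / q) * f k :=
        mul_le_mul_of_nonneg_left hfr (by positivity)
      rw [div_pow, hqd] at hCvol
      have h3 : 2 * ((n : ℝ) + 1) ^ 2 * M * (f k / q) = 2 * ((n : ℝ) + 1) ^ 2 * (M / q) * f k := by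
        ring
      linarith
    have h2 : M ^ (n + 1) < N * (M ^ (n + 1) / k * C.card) :=
      hk.trans_le (mul_le_mul_of_nonneg_left h1 (Nat.cast_nonneg _))
    have h3 : (N : ℝ) * (M ^ (n + 1) / k * C.card) = M ^ (n + 1) * ((C.card * N : ℝ) / k) := by
      ring
    have h4 : (1 : ℝ) < (C.card * N : ℝ) / k := by
      rw [h3] at h2
      exact (lt_mul_iff_one_lt_right (by positivity)).1 h2
    rw [one_lt_div hk0'] at h4
    exact_mod_cast h4.le
  refine (dirichletEig_le_of_cubes hb hR hℓ hμ C hC hcount).trans_eq ?_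
  field_simp

theorem statement_15 (d : ℕ) (hd : 2 ≤ d) (V : ℝ) (hV : 0 < V) (f : ℕ → ℝ)
    (hfpos : ∀ k, 0 < f k)
    (hf : f =o[atTop] fun k : ℕ => (k : ℝ) ^ ((1 : ℝ) / (d : ℝ)))
    (hne : ∀ k : ℕ, ∃ Ω : Set (EuclideanSpace ℝ (Fin d)),
      IsOpen Ω ∧ Convex ℝ Ω ∧ Bornology.IsBounded Ω ∧
      V ≤ (volume Ω).toReal ∧ (μH[(d : ℝ) - 1] (frontier Ω)).toReal ≤ f k) :
    Filter.limsup
      (fun k : ℕ => (k : ℝ) ^ (-(2 : ℝ) / (d : ℝ)) *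
        sSup {t : ℝ | ∃ Ω : Set (EuclideanSpace ℝ (Fin d)),
          IsOpen Ω ∧ Convex ℝ Ω ∧ Bornology.IsBounded Ω ∧
          V ≤ (volume Ω).toReal ∧ (μH[(d : ℝ) - 1] (frontier Ω)).toReal ≤ f k ∧
          dirichletEig d k Ω = t})
      Filter.atTop ≤ weylConst d * V ^ (-(2 : ℝ) / (d : ℝ)) := by
  obtain ⟨n, rfl⟩ : ∃ n, d = n + 1 := ⟨d - 1, by lia⟩
  have hdim : ((n + 1 : ℕ) : ℝ) - 1 = n := by push_cast; ring
  refine le_of_forall_pos_le_add fun ε hε => ?_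
  have hΛ := lt_add_of_pos_right (weylConst (n + 1) * V ^ (-(2 : ℝ) / ((n + 1 : ℕ) : ℝ))) hε
  set Λ := weylConst (n + 1) * V ^ (-(2 : ℝ) / ((n + 1 : ℕ) : ℝ)) + ε
  have hΛ0 : 0 ≤ Λ := by
    refine le_trans ?_ hΛ.le
    have := unitBallVol_pos (n + 1)
    unfold weylConst
    positivity
  -- the real `limsup` needs a lower bound on the sequence, which nonnegativity provides
  refine limsup_le_of_le ?_ ?_
  · refine IsCoboundedUnder.of_frequently_ge (a := 0) (Frequently.of_forall fun k => ?_)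
    refine mul_nonneg (by positivity) (Real.sSup_nonneg ?_)
    rintro _ ⟨Ω, -, -, -, -, -, rfl⟩
    exact dirichletEig_nonneg _ _ _
  · filter_upwards [eventually_dirichletEig_le hV hΛ f hf] with k ⟨hk0, hk⟩
    have hk0' : (0 : ℝ) < k := by exact_mod_cast hk0
    have hq : ((k : ℝ) ^ ((1 : ℝ) / ((n + 1 : ℕ) : ℝ))) ^ 2 =
        ((k : ℝ) ^ (-(2 : ℝ) / ((n + 1 : ℕ) : ℝ)))⁻¹ := by
      rw [← Real.rpow_natCast, ← Real.rpow_mul hk0'.le, ← Real.rpow_neg hk0'.le]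
      congr 1
      push_cast
      ring
    have hp : 0 < (k : ℝ) ^ (-(2 : ℝ) / ((n + 1 : ℕ) : ℝ)) := Real.rpow_pos_of_pos hk0' _
    rw [mul_comm, ← le_div_iff₀ hp, div_eq_mul_inv, ← hq]
    refine Real.sSup_le ?_ (by positivity)
    rintro _ ⟨Ω, ho, hc, hb, hvol, hfr, rfl⟩
    rw [hdim] at hfr
    exact hk Ω ho hc hb hvol hfr
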